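/- Let f ∈ C^∞(ℝ^N) be such that fg ∈ S_ω(ℝ^N) for every g ∈ S_ω(ℝ^N). Then f ∈ E_ω(ℝ^N). -/

import Mathlib

open Real Set Filter

noncomputable section

abbrev Euc (N : ℕ) := EuclideanSpace ℝ (Fin N)

/-- single partial derivative in direction `i` -/
noncomputable def pd {N : ℕ} (i : Fin N) (f : Euc N → ℝ) : Euc N → ℝ :=
  fun x => fderiv ℝ f x (EuclideanSpace.single i 1)

/-- iterated partial derivative `∂^α` for a multi-index `α` -/
noncomputable def pdm {N : ℕ} (α : Fin N → ℕ) (f : Euc N → ℝ) : Euc N → ℝ :=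
  ((List.ofFn fun i : Fin N => (pd i)^[α i]).foldr (· ∘ ·) id) f

/-- length `|α|` of a multi-index -/
def msize {N : ℕ} (α : Fin N → ℕ) : ℕ := ∑ i, α i

/-- the Young conjugate `φ*_ω(s) = sup_{t ≥ 0} (s t - ω(e^t))` -/
noncomputable def phiStar (ω : ℝ → ℝ) (s : ℝ) : ℝ :=
  sSup {y : ℝ | ∃ t : ℝ, 0 ≤ t ∧ y = s * t - ω (Real.exp t)}

/-- non-quasianalytic weight function in the sense of Braun-Meise-Taylor -/
structure IsWeightFun (ω : ℝ → ℝ) : Prop where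
  nonneg : ∀ t, 0 ≤ t → 0 ≤ ω t
  cont : ContinuousOn ω (Ici 0)
  mono : MonotoneOn ω (Ici 0)
  alpha : ∃ K : ℝ, 1 ≤ K ∧ ∀ t, 0 ≤ t → ω (2 * t) ≤ K * (1 + ω t)
  beta : MeasureTheory.IntegrableOn (fun t => ω t / (1 + t ^ 2)) (Ici 1)
  gamma : ∃ a : ℝ, ∃ b : ℝ, 0 < b ∧ ∀ t, 0 ≤ t → a + b * Real.log (1 + t) ≤ ω t
  delta : ConvexOn ℝ univ (fun t => ω (Real.exp t))

/-- membership in `𝒮_ω(ℝ^N)` -/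
def MemS (ω : ℝ → ℝ) {N : ℕ} (f : Euc N → ℝ) : Prop :=
  ContDiff ℝ (⊤ : ℕ∞) f ∧ ∀ lam mu : ℝ, 0 < lam → 0 < mu → ∃ C : ℝ,
    ∀ (α : Fin N → ℕ) (x : Euc N),
      Real.exp (mu * ω ‖x‖) * |pdm α f x| ≤ C * Real.exp (lam * phiStar ω (msize α / lam))

/-- membership in `ℰ_ω(ℝ^N)` -/
def MemE (ω : ℝ → ℝ) {N : ℕ} (f : Euc N → ℝ) : Prop :=
  ContDiff ℝ (⊤ : ℕ∞) f ∧ ∀ K : Set (Euc N), IsCompact K → ∀ m : ℕ, 0 < m → ∃ C : ℝ,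
    ∀ (α : Fin N → ℕ), ∀ x ∈ K, |pdm α f x| ≤ C * Real.exp (m * phiStar ω (msize α / m))

/-- membership in `𝒟_ω(ℝ^N)` -/
def MemD (ω : ℝ → ℝ) {N : ℕ} (f : Euc N → ℝ) : Prop :=
  MemE ω f ∧ HasCompactSupport f

/-- membership in `𝒪_{M,ω}(ℝ^N)`: slowly increasing functions of Beurling type -/
def MemOM (ω : ℝ → ℝ) {N : ℕ} (f : Euc N → ℝ) : Prop :=
  ContDiff ℝ (⊤ : ℕ∞) f ∧ ∀ m : ℕ, 0 < m → ∃ C : ℝ, 0 < C ∧ ∃ n : ℕ,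
    ∀ (α : Fin N → ℕ) (x : Euc N),
      |pdm α f x| ≤ C * Real.exp (n * ω ‖x‖ + m * phiStar ω (msize α / m))

/-- the weighted sup norm `r_{m,n}` -/
noncomputable def rNorm (ω : ℝ → ℝ) {N : ℕ} (m : ℕ) (n : ℤ) (f : Euc N → ℝ) : ℝ :=
  ⨆ p : (Fin N → ℕ) × Euc N,
    |pdm p.1 f p.2| * Real.exp (-(n : ℝ) * ω ‖p.2‖ - m * phiStar ω (msize p.1 / m))

/-- finiteness of the norm `r_{m,n}` -/
def rBdd (ω : ℝ → ℝ) {N : ℕ} (m : ℕ) (n : ℤ) (f : Euc N → ℝ) : Prop :=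
  BddAbove (Set.range fun p : (Fin N → ℕ) × Euc N =>
    |pdm p.1 f p.2| * Real.exp (-(n : ℝ) * ω ‖p.2‖ - m * phiStar ω (msize p.1 / m)))

/-- membership in `𝒪^m_{n,ω}(ℝ^N)` -/
def MemOmn (ω : ℝ → ℝ) {N : ℕ} (m : ℕ) (n : ℤ) (f : Euc N → ℝ) : Prop :=
  ContDiff ℝ (⊤ : ℕ∞) f ∧ rBdd ω m n f

/-- the norm `q_{λ,μ}` of `𝒮_ω(ℝ^N)` -/
noncomputable def qNorm (ω : ℝ → ℝ) {N : ℕ} (lam mu : ℝ) (f : Euc N → ℝ) : ℝ :=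
  ⨆ p : (Fin N → ℕ) × Euc N,
    Real.exp (-(lam * phiStar ω (msize p.1 / lam)) + mu * ω ‖p.2‖) * |pdm p.1 f p.2|

/-- finiteness of the norm `q_{m,g}` -/
def qgBdd (ω : ℝ → ℝ) {N : ℕ} (m : ℕ) (g f : Euc N → ℝ) : Prop :=
  BddAbove (Set.range fun p : (Fin N → ℕ) × Euc N =>
    |g p.2| * |pdm p.1 f p.2| * Real.exp (-(m : ℝ) * phiStar ω (msize p.1 / m)))

end

open scoped Topology

/-!
If `φ*_ω` is finite everywhere, then `ω(t) = o(t)` puts `exp (-‖x‖² / 2)` in `𝒮_ω` and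
`exp (‖x‖² / 2)` in `ℰ_ω`. By condition (α), `ℰ_ω` is an algebra, so
`f = (f * exp (-‖x‖² / 2)) * exp (‖x‖² / 2)` lies in it.

Otherwise `ω` grows at most logarithmically, and `𝒮_ω` consists of the rapidly decreasing
functions with uniformly bounded derivatives: it contains the rapidly decreasing functions with
spectrum in the unit ball. A gliding hump argument shows that `f` has polynomial growth, say of
degree `m`. For `ψ` with small spectrum and `ψ 0 = 1`, both `f ψ(· / k)` and its `k`-th power, which
is `f ^ k` times a function with small spectrum, belong to `𝒮_ω`. Hence `f ψ(· / k)` is of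
exponential type at most `1 / k` along lines, and Bernstein's inequality bounds its derivatives of
order `m + 1` by `O(1 / k)`. As `k → ∞` these converge to those of `f`, so `f` is a polynomial.
-/

/-! ### Partial derivatives -/

section PartialDerivatives

open scoped ContDiff

variable {N : ℕ} {f g : Euc N → ℝ}

lemma contDiff_pd (hf : ContDiff ℝ ∞ f) (i : Fin N) : ContDiff ℝ ∞ (pd i f) :=
  (hf.fderiv_right (by simp)).clm_apply contDiff_const

lemma contDiff_pd_iterate (hf : ContDiff ℝ ∞ f) (i : Fin N) (n : ℕ) :
    ContDiff ℝ ∞ ((pd i)^[n] f) := by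
  induction n generalizing f with
  | zero => exact hf
  | succ _ ih => exact ih (contDiff_pd hf i)

lemma contDiff_uncurry_pd_iterate {E : Type*} [NormedAddCommGroup E] [NormedSpace ℝ E]
    {Φ : E → Euc N → ℝ} (hΦ : ContDiff ℝ ∞ (Function.uncurry Φ)) (i : Fin N) (n : ℕ) :
    ContDiff ℝ ∞ (Function.uncurry fun c => (pd i)^[n] (Φ c)) := by
  induction n with
  | zero => exact hΦ
  | succ n ih =>
    simp only [Function.iterate_succ_apply']
    exact ContDiff.fderiv_apply (f := fun p : E × Euc N => (pd i)^[n] (Φ p.1))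
      (ih.comp ((contDiff_fst.comp contDiff_fst).prodMk contDiff_snd)) contDiff_snd
      contDiff_const (by simp)

lemma pd_comm (hf : ContDiff ℝ ∞ f) (i j : Fin N) : pd i (pd j f) = pd j (pd i f) := by
  have hd : Differentiable ℝ (fderiv ℝ f) :=
    (hf.fderiv_right (m := ∞) (by simp)).differentiable (by simp)
  have second_derivative (k l : Fin N) (x : Euc N) : pd k (pd l f) x =
      fderiv ℝ (fderiv ℝ f) x (EuclideanSpace.single k 1) (EuclideanSpace.single l 1) := by
    rw [pd, show pd l f = fun y => fderiv ℝ f y (EuclideanSpace.single l 1) from rfl,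
      ((hd x).hasFDerivAt.clm_apply
        (hasFDerivAt_const (EuclideanSpace.single l (1 : ℝ)) x)).fderiv]
    simp
  funext x
  rw [second_derivative, second_derivative]
  exact (hf.contDiffAt.isSymmSndFDerivAt
    (by simpa using show ((2 : ℕ∞) : ℕ∞ω) ≤ ∞ from WithTop.coe_le_coe.2 le_top)).eq _ _

lemma pd_iterate_comm (hf : ContDiff ℝ ∞ f) (i j : Fin N) (n : ℕ) :
    pd i ((pd j)^[n] f) = (pd j)^[n] (pd i f) := by
  induction n generalizing f with
  | zero => rfl
  | succ n ih => rw [Function.iterate_succ_apply, ih (contDiff_pd hf j), pd_comm hf,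
      Function.iterate_succ_apply]

lemma contDiff_foldr_pd (l : List (Fin N)) (α : Fin N → ℕ) (hf : ContDiff ℝ ∞ f) :
    ContDiff ℝ ∞ ((l.map fun i => (pd i)^[α i]).foldr (· ∘ ·) id f) := by
  induction l with
  | nil => exact hf
  | cons a l ih => exact contDiff_pd_iterate ih a _

lemma pd_foldr_comm (l : List (Fin N)) (α : Fin N → ℕ) (hf : ContDiff ℝ ∞ f) (i : Fin N) :
    pd i ((l.map fun j => (pd j)^[α j]).foldr (· ∘ ·) id f) =
      (l.map fun j => (pd j)^[α j]).foldr (· ∘ ·) id (pd i f) := by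
  induction l with
  | nil => rfl
  | cons a l ih =>
    simp only [List.map_cons, List.foldr_cons, Function.comp_apply]
    rw [pd_iterate_comm (contDiff_foldr_pd l α hf), ih]

lemma foldr_pd_add_single (l : List (Fin N)) (hl : l.Nodup) (α : Fin N → ℕ)
    (hf : ContDiff ℝ ∞ f) (i : Fin N) :
    (l.map fun j => (pd j)^[(α + Pi.single i 1 : Fin N → ℕ) j]).foldr (· ∘ ·) id f =
      (l.map fun j => (pd j)^[α j]).foldr (· ∘ ·) id (if i ∈ l then pd i f else f) := by
  induction l with
  | nil => simp
  | cons a l ih =>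
    rw [List.nodup_cons] at hl
    simp only [List.map_cons, List.foldr_cons, Function.comp_apply, ih hl.2]
    rcases eq_or_ne a i with rfl | hai
    · simp only [hl.1, List.mem_cons, or_false, if_true, if_false, Pi.add_apply, Pi.single_eq_same]
      rw [Function.iterate_succ_apply, pd_foldr_comm l α hf]
    · simp [List.mem_cons, hai, hai.symm]

lemma pdm_eq_foldr (α : Fin N → ℕ) (f : Euc N → ℝ) :
    pdm α f = ((List.finRange N).map fun i => (pd i)^[α i]).foldr (· ∘ ·) id f := by
  rw [pdm, List.ofFn_eq_map]

lemma pdm_zero (f : Euc N → ℝ) : pdm 0 f = f := by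
  rw [pdm_eq_foldr]
  induction List.finRange N with
  | nil => rfl
  | cons a l ih => simpa using ih

lemma pdm_add_single (hf : ContDiff ℝ ∞ f) (α : Fin N → ℕ) (i : Fin N) :
    pdm (α + Pi.single i 1) f = pdm α (pd i f) := by
  simp only [pdm_eq_foldr]
  rw [foldr_pd_add_single _ (List.nodup_finRange N) α hf, if_pos (List.mem_finRange i)]

lemma pdm_add_single_iterate (hf : ContDiff ℝ ∞ f) (α : Fin N → ℕ) (i : Fin N) (n : ℕ) :
    pdm (α + Pi.single i n) f = pdm α ((pd i)^[n] f) := by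
  induction n generalizing f with
  | zero => simp
  | succ n ih =>
    rw [Function.iterate_succ_apply, ← ih (contDiff_pd hf i), Pi.single_add, ← add_assoc,
      pdm_add_single hf]

lemma pdm_single (hf : ContDiff ℝ ∞ f) (i : Fin N) (n : ℕ) :
    pdm (Pi.single i n) f = (pd i)^[n] f := by
  simpa [pdm_zero] using pdm_add_single_iterate hf 0 i n

@[simp] lemma msize_zero : msize (0 : Fin N → ℕ) = 0 := by simp [msize]

lemma msize_add (α β : Fin N → ℕ) : msize (α + β) = msize α + msize β := by
  simp [msize, Finset.sum_add_distrib]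

@[simp] lemma msize_single (i : Fin N) (n : ℕ) : msize (Pi.single i n) = n := by
  simp [msize]

lemma eq_zero_of_msize_eq_zero {α : Fin N → ℕ} (h : msize α = 0) : α = 0 := by
  funext i
  simpa using (Finset.sum_eq_zero_iff.1 h) i (Finset.mem_univ i)

lemma sub_single_add_single {α : Fin N → ℕ} {i : Fin N} (h : α i ≠ 0) :
    α - Pi.single i 1 + Pi.single i 1 = α := by
  funext j
  rcases eq_or_ne j i with rfl | hj
  · simpa using Nat.sub_add_cancel (Nat.one_le_iff_ne_zero.2 h)
  · simp [hj]

lemma msize_sub_single {α : Fin N → ℕ} {i : Fin N} (h : α i ≠ 0) :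
    msize (α - Pi.single i 1) + 1 = msize α := by
  conv_rhs => rw [← sub_single_add_single h, msize_add, msize_single]

lemma exists_eq_add_single {α : Fin N → ℕ} {n : ℕ} (h : msize α = n + 1) :
    ∃ (β : Fin N → ℕ) (i : Fin N), msize β = n ∧ α = β + Pi.single i 1 := by
  obtain ⟨i, -, hi⟩ : ∃ i ∈ Finset.univ, α i ≠ 0 :=
    Finset.exists_ne_zero_of_sum_ne_zero (ne_of_eq_of_ne h n.succ_ne_zero)
  have hsize := msize_sub_single hi
  exact ⟨_, i, by omega, (sub_single_add_single hi).symm⟩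

lemma apply_le_msize (α : Fin N → ℕ) (i : Fin N) : α i ≤ msize α :=
  Finset.single_le_sum (fun _ _ => Nat.zero_le _) (Finset.mem_univ i)

lemma pd_add (hf : ContDiff ℝ ∞ f) (hg : ContDiff ℝ ∞ g) (i : Fin N) :
    pd i (fun x => f x + g x) = fun x => pd i f x + pd i g x := by
  funext x
  simp only [pd]
  rw [fderiv_fun_add (hf.differentiable (by simp) x) (hg.differentiable (by simp) x)]
  rfl

lemma pd_mul (hf : ContDiff ℝ ∞ f) (hg : ContDiff ℝ ∞ g) (i : Fin N) :
    pd i (fun x => f x * g x) = fun x => pd i f x * g x + f x * pd i g x := by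
  funext x
  simp only [pd]
  rw [fderiv_fun_mul (hf.differentiable (by simp) x) (hg.differentiable (by simp) x)]
  simp only [add_apply, smul_apply, smul_eq_mul]
  ring

lemma pdm_add (hf : ContDiff ℝ ∞ f) (hg : ContDiff ℝ ∞ g) (α : Fin N → ℕ) :
    pdm α (fun x => f x + g x) = fun x => pdm α f x + pdm α g x := by
  induction h : msize α generalizing α f g with
  | zero => simp [eq_zero_of_msize_eq_zero h, pdm_zero]
  | succ n ih =>
    obtain ⟨β, i, hβ, rfl⟩ := exists_eq_add_single h
    rw [pdm_add_single (hf.add hg), pdm_add_single hf, pdm_add_single hg, pd_add hf hg,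
      ih (contDiff_pd hf i) (contDiff_pd hg i) β hβ]

lemma pdm_const_mul (hf : ContDiff ℝ ∞ f) (c : ℝ) (α : Fin N → ℕ) :
    pdm α (fun x => c * f x) = fun x => c * pdm α f x := by
  induction h : msize α generalizing α f with
  | zero => simp [eq_zero_of_msize_eq_zero h, pdm_zero]
  | succ n ih =>
    obtain ⟨β, i, hβ, rfl⟩ := exists_eq_add_single h
    have hpd : pd i (fun x => c * f x) = fun x => c * pd i f x := by
      funext x
      simp [pd, fderiv_const_mul (hf.differentiable (by simp) x)]
    rw [pdm_add_single (contDiff_const.mul hf), pdm_add_single hf, hpd,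
      ih (contDiff_pd hf i) β hβ]

lemma abs_pdm_mul_le (hf : ContDiff ℝ ∞ f) (hg : ContDiff ℝ ∞ g) {x : Euc N}
    {a b : ℕ → ℝ} {c : ℝ} (ha : ∀ α, |pdm α f x| ≤ a (msize α))
    (hb : ∀ α, |pdm α g x| ≤ b (msize α)) (α : Fin N → ℕ)
    (hab : ∀ i j, i + j = msize α → a i * b j ≤ c) :
    |pdm α (fun y => f y * g y) x| ≤ 2 ^ msize α * c := by
  induction hα : msize α generalizing α f g a b with
  | zero =>
    obtain rfl := eq_zero_of_msize_eq_zero hα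
    have hf₀ := ha 0
    have hg₀ := hb 0
    rw [pdm_zero, msize_zero] at hf₀ hg₀
    rw [pdm_zero, abs_mul, pow_zero, one_mul]
    exact (mul_le_mul hf₀ hg₀ (abs_nonneg _) ((abs_nonneg _).trans hf₀)).trans (hab 0 0 (by simp))
  | succ n ih =>
    obtain ⟨β, i, rfl, rfl⟩ := exists_eq_add_single hα
    have hfi := contDiff_pd hf i
    have hgi := contDiff_pd hg i
    have shift {h : Euc N → ℝ} (hh : ContDiff ℝ ∞ h) {d : ℕ → ℝ}
        (hd : ∀ γ, |pdm γ h x| ≤ d (msize γ)) (γ : Fin N → ℕ) :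
        |pdm γ (pd i h) x| ≤ d (msize γ + 1) := by
      have := hd (γ + Pi.single i 1)
      rwa [pdm_add_single hh, msize_add, msize_single] at this
    rw [pdm_add_single (hf.mul hg), pd_mul hf hg, pdm_add (hfi.mul hg) (hf.mul hgi)]
    calc _ ≤ _ := abs_add_le _ _
      _ ≤ 2 ^ msize β * c + 2 ^ msize β * c := add_le_add
          (ih hfi hg (shift hf ha) hb β (fun k l _ => hab (k + 1) l (by omega)) rfl)
          (ih hf hgi ha (shift hg hb) β (fun k l _ => hab k (l + 1) (by omega)) rfl)
      _ = _ := by ring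

lemma norm_iteratedFDeriv_pd_le (hf : ContDiff ℝ ∞ f) (i : Fin N) (k : ℕ) (x : Euc N) :
    ‖iteratedFDeriv ℝ k (pd i f) x‖ ≤ ‖iteratedFDeriv ℝ (k + 1) f x‖ := by
  have hd : ContDiff ℝ ∞ (fderiv ℝ f) := hf.fderiv_right (by simp)
  have h := (ContinuousLinearMap.apply ℝ ℝ
    (EuclideanSpace.single i (1 : ℝ))).norm_iteratedFDeriv_comp_left (x := x)
    (n := k) hd.contDiffAt (by exact_mod_cast le_top)
  rw [norm_iteratedFDeriv_fderiv] at h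
  refine h.trans (mul_le_of_le_one_left (norm_nonneg _) ?_)
  refine ContinuousLinearMap.opNorm_le_bound _ zero_le_one fun L => ?_
  simpa using L.le_opNorm (EuclideanSpace.single i (1 : ℝ))

lemma abs_pdm_le_norm_iteratedFDeriv (hf : ContDiff ℝ ∞ f) (α : Fin N → ℕ) (x : Euc N) :
    |pdm α f x| ≤ ‖iteratedFDeriv ℝ (msize α) f x‖ := by
  induction h : msize α generalizing α f with
  | zero => simp [eq_zero_of_msize_eq_zero h, pdm_zero]
  | succ n ih =>
    obtain ⟨β, i, hβ, rfl⟩ := exists_eq_add_single h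
    rw [pdm_add_single hf]
    exact (ih (contDiff_pd hf i) β hβ).trans (norm_iteratedFDeriv_pd_le hf i n x)

lemma iteratedDeriv_comp_line (hf : ContDiff ℝ ∞ f) (x : Euc N) (i : Fin N) (n : ℕ) (t : ℝ) :
    iteratedDeriv n (fun s : ℝ => f (x + s • EuclideanSpace.single i (1 : ℝ))) t =
      (pd i)^[n] f (x + t • EuclideanSpace.single i (1 : ℝ)) := by
  induction n generalizing f with
  | zero => simp
  | succ n ih =>
    rw [iteratedDeriv_succ', Function.iterate_succ_apply, ← ih (contDiff_pd hf i)]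
    congr 1
    funext s
    have hline : HasDerivAt (fun s : ℝ => x + s • EuclideanSpace.single i (1 : ℝ))
        (EuclideanSpace.single i (1 : ℝ)) s := by
      simpa using ((hasDerivAt_id s).smul_const (EuclideanSpace.single i (1 : ℝ))).const_add x
    exact ((hf.differentiable (by simp) _).hasFDerivAt.comp_hasDerivAt s hline).deriv

lemma pd_iterate_fun_zero (i : Fin N) (n : ℕ) : (pd i)^[n] (0 : Euc N → ℝ) = 0 :=
  Function.iterate_fixed (by funext x; simp [pd]) n

lemma pdm_fun_zero (α : Fin N → ℕ) : pdm α (0 : Euc N → ℝ) = 0 := by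
  rw [pdm_eq_foldr]
  induction List.finRange N with
  | nil => rfl
  | cons a l ih => simp only [List.map_cons, List.foldr_cons, Function.comp_apply, ih,
      pd_iterate_fun_zero]

lemma pd_iterate_eq_zero_of_le {i : Fin N} {m n : ℕ} (h : (pd i)^[m] f = 0) (hmn : m ≤ n) :
    (pd i)^[n] f = 0 := by
  obtain ⟨k, rfl⟩ := Nat.exists_eq_add_of_le' hmn
  rw [Function.iterate_add_apply, h, pd_iterate_fun_zero]

lemma pdm_eq_zero_of_pd_iterate_eq_zero (hf : ContDiff ℝ ∞ f) {m : ℕ}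
    (h : ∀ i, (pd i)^[m] f = 0) {α : Fin N → ℕ} (hα : N * m < msize α) : pdm α f = 0 := by
  obtain ⟨i, -, hi⟩ : ∃ i ∈ Finset.univ, m < α i :=
    Finset.exists_lt_of_sum_lt (by simpa [msize] using hα)
  have hsplit : α = Function.update α i 0 + Pi.single i (α i) := by
    funext j
    rcases eq_or_ne j i with rfl | hj <;> simp [*]
  rw [hsplit, pdm_add_single_iterate hf, pd_iterate_eq_zero_of_le (h i) hi.le,
    pdm_fun_zero]

end PartialDerivatives

/-! ### Entire extensions and Bernstein's inequality -/

section Bernstein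

open scoped ContDiff Nat

lemma abs_sub_taylor_sum_le {u : ℝ → ℝ} {n : ℕ} (hu : ContDiff ℝ (n + 1) u) {C : ℝ}
    (hC : ∀ t, |iteratedDeriv (n + 1) u t| ≤ C) (x t : ℝ) :
    |u t - ∑ k ∈ Finset.range (n + 1), iteratedDeriv k u x / k ! * (t - x) ^ k| ≤
      C * |t - x| ^ (n + 1) / (n + 1)! := by
  rcases eq_or_ne x t with rfl | hxt
  · simp [Finset.sum_range_succ']
  obtain ⟨y, -, hy⟩ := taylor_mean_remainder_lagrange_iteratedDeriv hxt hu.contDiffOn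
  have hsum : ∑ k ∈ Finset.range (n + 1), iteratedDeriv k u x / k ! * (t - x) ^ k =
      taylorWithinEval u n (uIcc x t) x t := by
    rw [taylor_within_apply]
    refine Finset.sum_congr rfl fun k hk => ?_
    rw [iteratedDerivWithin_eq_iteratedDeriv (uniqueDiffOn_uIcc hxt)
      (hu.of_le (by exact_mod_cast (Finset.mem_range.1 hk).le)).contDiffAt left_mem_uIcc,
      smul_eq_mul]
    ring
  rw [hsum, hy, abs_div, abs_mul, abs_pow, Nat.abs_cast]
  gcongr
  exact hC y

lemma hasSum_taylor {u : ℝ → ℝ} (hu : ContDiff ℝ ∞ u) {C σ : ℝ}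
    (hC : ∀ n t, |iteratedDeriv n u t| ≤ C * σ ^ n) (x t : ℝ) :
    HasSum (fun n : ℕ => iteratedDeriv n u x / n ! * (t - x) ^ n) (u t) := by
  have hlim : Tendsto (fun n : ℕ => C * ((σ * |t - x|) ^ n / n !)) atTop (𝓝 0) := by
    simpa using (FloorSemiring.tendsto_pow_div_factorial_atTop (σ * |t - x|)).const_mul C
  have hsummable : Summable fun n : ℕ => iteratedDeriv n u x / n ! * (t - x) ^ n := by
    refine .of_norm_bounded ((Real.summable_pow_div_factorial (σ * |t - x|)).mul_left C) fun n => ?_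
    rw [norm_mul, norm_div, norm_pow, Real.norm_natCast, Real.norm_eq_abs, Real.norm_eq_abs]
    calc _ ≤ C * σ ^ n / n ! * |t - x| ^ n := by gcongr; exact hC n x
      _ = _ := by rw [mul_pow]; ring
  rw [hsummable.hasSum_iff_tendsto_nat, ← tendsto_add_atTop_iff_nat 1]
  refine tendsto_const_nhds.congr_dist (squeeze_zero (fun _ => dist_nonneg) (fun n => ?_)
    (hlim.comp (tendsto_add_atTop_nat 1)))
  rw [Real.dist_eq]
  refine (abs_sub_taylor_sum_le (hu.of_le (by exact_mod_cast le_top)) (hC (n + 1)) x t).trans_eq ?_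
  simp only [Function.comp_apply, mul_pow]
  ring

lemma exists_entire_hasSum {a : ℕ → ℂ} {C σ : ℝ} (hσ : 0 ≤ σ) (ha : ∀ n, ‖a n‖ ≤ C * σ ^ n) :
    ∃ F : ℂ → ℂ, Differentiable ℂ F ∧ (∀ z, HasSum (fun n => a n / n ! * z ^ n) (F z)) ∧
      ∀ z, ‖F z‖ ≤ C * Real.exp (σ * ‖z‖) := by
  have hC : 0 ≤ C := by simpa using (norm_nonneg _).trans (ha 0)
  have hterm (z : ℂ) (n : ℕ) : ‖a n / n ! * z ^ n‖ ≤ C * ((σ * ‖z‖) ^ n / n !) := by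
    rw [norm_mul, norm_div, norm_pow, Complex.norm_natCast]
    calc ‖a n‖ / n ! * ‖z‖ ^ n ≤ C * σ ^ n / n ! * ‖z‖ ^ n := by gcongr; exact ha n
      _ = _ := by rw [mul_pow]; ring
  have hexp (r : ℝ) : HasSum (fun n : ℕ => C * (r ^ n / n !)) (C * Real.exp r) := by
    rw [Real.exp_eq_exp_ℝ]
    exact (NormedSpace.expSeries_div_hasSum_exp r).mul_left C
  refine ⟨fun z => ∑' n, a n / n ! * z ^ n, fun z => ?_,
    fun z => (Summable.of_norm_bounded (hexp _).summable (hterm z)).hasSum,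
    fun z => tsum_of_norm_bounded (hexp _) (hterm z)⟩
  refine (Complex.differentiableOn_tsum_of_summable_norm (hexp (σ * (‖z‖ + 1))).summable
    (fun n => by fun_prop) Metric.isOpen_ball (fun n w hw => (hterm w n).trans ?_)).differentiableAt
    (Metric.isOpen_ball.mem_nhds (show z ∈ Metric.ball (0 : ℂ) (‖z‖ + 1) by simp))
  have : ‖w‖ ≤ ‖z‖ + 1 := (mem_ball_zero_iff.1 hw).le
  gcongr

lemma exists_entire_extension {u : ℝ → ℝ} (hu : ContDiff ℝ ∞ u) {C σ : ℝ} (hσ : 0 ≤ σ)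
    (hC : ∀ n t, |iteratedDeriv n u t| ≤ C * σ ^ n) :
    ∃ F : ℂ → ℂ, Differentiable ℂ F ∧ (∀ t : ℝ, F t = u t) ∧
      ∀ z, ‖F z‖ ≤ C * Real.exp (σ * ‖z‖) := by
  obtain ⟨F, hF, hsum, hbound⟩ := exists_entire_hasSum
    (a := fun n => ((iteratedDeriv n u 0 : ℝ) : ℂ)) hσ fun n => by simpa using hC n 0
  refine ⟨F, hF, fun t => (hsum t).unique ?_, hbound⟩
  simpa using Complex.hasSum_ofReal.2 (hasSum_taylor hu hC 0 t)

lemma entire_eq_of_eq_on_real {F G : ℂ → ℂ} (hF : Differentiable ℂ F) (hG : Differentiable ℂ G)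
    (h : ∀ t : ℝ, F t = G t) : F = G := by
  have hreal : Tendsto (fun t : ℝ => (t : ℂ)) (𝓝[≠] 0) (𝓝[≠] 0) :=
    tendsto_nhdsWithin_iff.2 ⟨(Complex.continuous_ofReal.tendsto' 0 0 rfl).mono_left
      nhdsWithin_le_nhds, eventually_mem_nhdsWithin.mono fun t ht => Complex.ofReal_ne_zero.2 ht⟩
  exact AnalyticOnNhd.eq_of_frequently_eq
    (hF.differentiableOn.analyticOnNhd isOpen_univ) (hG.differentiableOn.analyticOnNhd isOpen_univ)
    (hreal.frequently (Eventually.of_forall h).frequently)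

lemma norm_le_mul_exp_re {F : ℂ → ℂ} (hF : Differentiable ℂ F) {D M σ : ℝ}
    (hD : ∀ z, ‖F z‖ ≤ D * Real.exp (σ * ‖z‖)) (hM : ∀ t : ℝ, ‖F (t * Complex.I)‖ ≤ M) {z : ℂ}
    (hz : 0 ≤ z.re) : ‖F z‖ ≤ M * Real.exp (σ * z.re) := by
  set f : ℂ → ℂ := fun w => F w * Complex.exp (-σ * w)
  have hf (w : ℂ) : ‖f w‖ = ‖F w‖ * Real.exp (-(σ * w.re)) := by
    simp [f, Complex.norm_exp]
  have hgrowth : f =O[Bornology.cobounded ℂ ⊓ 𝓟 {w | 0 < w.re}]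
      fun w => Real.exp (2 * |σ| * ‖w‖ ^ (1 : ℝ)) := by
    refine .of_bound |D| (Eventually.of_forall fun w => ?_)
    rw [hf, Real.norm_of_nonneg (Real.exp_pos _).le, Real.rpow_one]
    have hexponent : σ * ‖w‖ + -(σ * w.re) ≤ 2 * |σ| * ‖w‖ := by
      have h₁ : σ * ‖w‖ ≤ |σ| * ‖w‖ := by gcongr; exact le_abs_self σ
      have h₂ : -(σ * w.re) ≤ |σ| * ‖w‖ := (neg_le_abs _).trans <| by
        rw [abs_mul]; gcongr; exact Complex.abs_re_le_norm w
      linarith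
    calc ‖F w‖ * Real.exp (-(σ * w.re))
        ≤ |D| * Real.exp (σ * ‖w‖) * Real.exp (-(σ * w.re)) := by
          gcongr; exact (hD w).trans (by gcongr; exact le_abs_self D)
      _ = |D| * Real.exp (σ * ‖w‖ + -(σ * w.re)) := by rw [mul_assoc, Real.exp_add]
      _ ≤ |D| * Real.exp (2 * |σ| * ‖w‖) := by gcongr
  have hreal : IsBoundedUnder (· ≤ ·) atTop fun x : ℝ => ‖f x‖ := by
    refine isBoundedUnder_of_eventually_le (a := D) ((eventually_ge_atTop 0).mono fun x hx => ?_)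
    have := hD x
    rw [Complex.norm_of_nonneg hx] at this
    rwa [hf, Complex.ofReal_re, Real.exp_neg, ← div_eq_mul_inv, div_le_iff₀ (Real.exp_pos _)]
  have hpl := PhragmenLindelof.right_half_plane_of_bounded_on_real (C := M)
    (by fun_prop : Differentiable ℂ f).diffContOnCl ⟨1, one_lt_two, _, hgrowth⟩ hreal
    (fun t => by simpa [hf] using hM t) hz
  rwa [hf, Real.exp_neg, ← div_eq_mul_inv, div_le_iff₀ (Real.exp_pos _)] at hpl

lemma norm_le_mul_exp_abs_im {F : ℂ → ℂ} (hF : Differentiable ℂ F) {D M σ : ℝ}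
    (hD : ∀ z, ‖F z‖ ≤ D * Real.exp (σ * ‖z‖)) (hM : ∀ t : ℝ, ‖F t‖ ≤ M) (z : ℂ) :
    ‖F z‖ ≤ M * Real.exp (σ * |z.im|) := by
  wlog hz : 0 ≤ z.im generalizing F z
  · simpa using this (F := fun w => F (-w)) (by fun_prop) (fun w => by simpa using hD (-w))
      (fun t => by simpa using hM (-t)) (-z) (by simpa using (not_le.1 hz).le)
  have := norm_le_mul_exp_re (F := fun w => F (Complex.I * w)) (M := M) (z := -Complex.I * z)
    (by fun_prop) (fun w => by simpa using hD (Complex.I * w))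
    (fun t => by
      rw [mul_left_comm, Complex.I_mul_I]
      simpa using hM (-t)) (by simpa)
  simpa [← mul_assoc, abs_of_nonneg hz] using this

lemma iteratedDeriv_ofReal_of_entire {F : ℂ → ℂ} {u : ℝ → ℝ} (hF : Differentiable ℂ F)
    (hu : ContDiff ℝ ∞ u) (h : ∀ t : ℝ, F t = u t) (n : ℕ) (t : ℝ) :
    iteratedDeriv n F t = iteratedDeriv n u t := by
  induction n generalizing F u with
  | zero => simpa using h t
  | succ n ih =>
    rw [iteratedDeriv_succ', iteratedDeriv_succ']
    refine ih hF.deriv (contDiff_infty_iff_deriv.1 hu).2 fun s => ?_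
    have hFs : HasDerivAt (fun s : ℝ => F s) (deriv F s) s := (hF s).hasDerivAt.comp_ofReal
    have hus : HasDerivAt (fun s : ℝ => (u s : ℂ)) (deriv u s : ℝ) s :=
      (hu.differentiable (by simp) s).hasDerivAt.ofReal_comp
    rw [funext h] at hFs
    exact hFs.unique hus

lemma abs_iteratedDeriv_le_of_exponential_type {F : ℂ → ℂ} (hF : Differentiable ℂ F) {D σ : ℝ}
    (hσ : 0 < σ) (hD : ∀ z, ‖F z‖ ≤ D * Real.exp (σ * ‖z‖)) {u : ℝ → ℝ} (hu : ContDiff ℝ ∞ u)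
    (hFu : ∀ t : ℝ, F t = u t) {M : ℝ} (hM : ∀ t, |u t| ≤ M) (n : ℕ) (t : ℝ) :
    |iteratedDeriv n u t| ≤ n ! * (M * Real.exp 1) * σ ^ n := by
  have hM₀ : 0 ≤ M := (abs_nonneg _).trans (hM 0)
  have hsphere (z : ℂ) (hz : z ∈ Metric.sphere (t : ℂ) σ⁻¹) : ‖F z‖ ≤ M * Real.exp 1 := by
    refine (norm_le_mul_exp_abs_im hF hD (M := M) (fun s => by simpa [hFu] using hM s) z).trans ?_
    have : |z.im| ≤ σ⁻¹ := by
      simpa [mem_sphere_iff_norm.1 hz] using Complex.abs_im_le_norm (z - t)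
    gcongr
    calc σ * |z.im| ≤ σ * σ⁻¹ := by gcongr
      _ = 1 := mul_inv_cancel₀ hσ.ne'
  have := Complex.norm_iteratedDeriv_le_of_forall_mem_sphere_norm_le n (inv_pos.2 hσ)
    hF.diffContOnCl hsphere
  rw [iteratedDeriv_ofReal_of_entire hF hu hFu] at this
  simpa using this

lemma abs_iteratedDeriv_le_of_pow {u : ℝ → ℝ} (hu : ContDiff ℝ ∞ u) {C C' M σ σ' : ℝ}
    (hσ : 0 ≤ σ) (hσ' : 0 < σ') {k : ℕ} (hk : k ≠ 0)
    (hC : ∀ n t, |iteratedDeriv n u t| ≤ C * σ ^ n)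
    (hC' : ∀ n t, |iteratedDeriv n (fun s => u s ^ k) t| ≤ C' * σ' ^ n) (hM : ∀ t, |u t| ≤ M)
    (n : ℕ) (t : ℝ) : |iteratedDeriv n u t| ≤ n ! * (M * Real.exp 1) * (σ' / k) ^ n := by
  obtain ⟨F, hF, hFu, -⟩ := exists_entire_extension hu hσ hC
  obtain ⟨G, hG, hGu, hGbound⟩ := exists_entire_extension (hu.pow k) hσ'.le hC'
  have hFG : (fun z => F z ^ k) = G :=
    entire_eq_of_eq_on_real (hF.pow k) hG fun s => by simp [hFu, hGu]
  have hFbound (z : ℂ) : ‖F z‖ ≤ max 1 C' * Real.exp (σ' / k * ‖z‖) := by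
    refine le_of_pow_le_pow_left₀ hk (by positivity) ?_
    rw [← norm_pow, show F z ^ k = G z from congrFun hFG z, mul_pow, ← Real.exp_nat_mul]
    calc ‖G z‖ ≤ C' * Real.exp (σ' * ‖z‖) := hGbound z
      _ ≤ max 1 C' ^ k * Real.exp (σ' * ‖z‖) := by
        gcongr
        exact (le_max_right _ _).trans (le_self_pow₀ (le_max_left _ _) hk)
      _ = _ := by congr 2; field_simp
  exact abs_iteratedDeriv_le_of_exponential_type hF (by positivity) hFbound hu hFu hM n t

end Bernstein

/-! ### The Young conjugate -/

section Weight

open scoped Nat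

/-- Finiteness of the supremum defining the Young conjugate `phiStar ω s`. Where it fails,
`phiStar ω s` is the junk value `0` and not `+∞`. -/
def PhiStarFinite (ω : ℝ → ℝ) (s : ℝ) : Prop :=
  BddAbove {y : ℝ | ∃ t : ℝ, 0 ≤ t ∧ y = s * t - ω (Real.exp t)}

variable {ω : ℝ → ℝ}

lemma PhiStarFinite.le_phiStar {s : ℝ} (h : PhiStarFinite ω s) {t : ℝ} (ht : 0 ≤ t) :
    s * t - ω (Real.exp t) ≤ phiStar ω s :=
  le_csSup h ⟨t, ht, rfl⟩

lemma phiStar_le {s c : ℝ} (h : ∀ t, 0 ≤ t → s * t - ω (Real.exp t) ≤ c) : phiStar ω s ≤ c :=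
  csSup_le ⟨_, 0, le_rfl, rfl⟩ (by rintro _ ⟨t, ht, rfl⟩; exact h t ht)

lemma phiStar_eq_zero_of_not_phiStarFinite {s : ℝ} (hs : ¬ PhiStarFinite ω s) :
    phiStar ω s = 0 :=
  Real.sSup_of_not_bddAbove hs

lemma PhiStarFinite.mono {s r : ℝ} (hr : PhiStarFinite ω r) (hsr : s ≤ r) :
    PhiStarFinite ω s := by
  obtain ⟨b, hb⟩ := hr
  refine ⟨b, ?_⟩
  rintro _ ⟨t, ht, rfl⟩
  exact (by gcongr : s * t - ω (Real.exp t) ≤ r * t - ω (Real.exp t)).trans (hb ⟨t, ht, rfl⟩)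

lemma neg_le_phiStar (hω : 0 ≤ ω 1) (s : ℝ) : -ω 1 ≤ phiStar ω s := by
  by_cases h : PhiStarFinite ω s
  · simpa using h.le_phiStar le_rfl
  · rw [phiStar_eq_zero_of_not_phiStarFinite h]
    exact neg_nonpos.2 hω

lemma phiStar_add_le (hω : ∀ t, 0 ≤ t → 0 ≤ ω t) {a b : ℝ} (ha : 0 ≤ a) (hb : 0 ≤ b)
    (hab : PhiStarFinite ω (a + b)) : phiStar ω a + phiStar ω b ≤ phiStar ω (a + b) := by
  refine le_sub_iff_add_le.1 (phiStar_le fun t ht => ?_)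
  refine le_sub_comm.1 (phiStar_le fun r hr => ?_)
  have hωt := hω _ (Real.exp_pos t).le
  have hωr := hω _ (Real.exp_pos r).le
  rcases le_total t r with h | h
  · linarith [hab.le_phiStar hr, mul_le_mul_of_nonneg_left h ha]
  · linarith [hab.le_phiStar ht, mul_le_mul_of_nonneg_left h hb]

lemma two_pow_mul_exp_phiStar_le {K m : ℝ} (hK : 0 < K) (hm : 0 < m)
    (hα : ∀ t, 0 ≤ t → ω (2 * t) ≤ K * (1 + ω t)) {n : ℕ} (hfin : PhiStarFinite ω (n / m)) :
    2 ^ n * Real.exp (K * m * phiStar ω (n / (K * m))) ≤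
      Real.exp (K * m) * Real.exp (m * phiStar ω (n / m)) := by
  rw [← Real.exp_log (pow_pos two_pos n), Real.log_pow, ← Real.exp_add, ← Real.exp_add,
    Real.exp_le_exp]
  suffices phiStar ω (n / (K * m)) ≤
      (K * m + m * phiStar ω (n / m) - n * Real.log 2) / (K * m) by
    rw [le_div_iff₀ (by positivity)] at this
    linarith
  refine phiStar_le fun t ht => ?_
  have hstar : n * (t + Real.log 2) - m * ω (2 * Real.exp t) ≤ m * phiStar ω (n / m) := by
    have h := hfin.le_phiStar (add_nonneg ht (Real.log_nonneg one_le_two))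
    rw [Real.exp_add, Real.exp_log two_pos, mul_comm (Real.exp t)] at h
    calc _ = m * (n / m * (t + Real.log 2) - ω (2 * Real.exp t)) := by field_simp
      _ ≤ _ := by gcongr
  rw [le_div_iff₀ (by positivity)]
  calc (n / (K * m) * t - ω (Real.exp t)) * (K * m) = n * t - m * (K * ω (Real.exp t)) := by
        field_simp
    _ ≤ _ := by linarith [mul_le_mul_of_nonneg_left (hα _ (Real.exp_pos t).le) hm.le]

lemma div_le_integral_of_monotoneOn (hmono : MonotoneOn ω (Ici 0)) {r : ℝ} (hr : 1 ≤ r)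
    (hωr : 0 ≤ ω r)
    (hint : IntervalIntegrable (fun t => ω t / (1 + t ^ 2)) MeasureTheory.volume r (2 * r)) :
    ω r / r ≤ 5 * ∫ t in r..(2 * r), ω t / (1 + t ^ 2) := by
  have hlow : ∫ _ in r..(2 * r), ω r / (5 * r ^ 2) ≤ ∫ t in r..(2 * r), ω t / (1 + t ^ 2) := by
    refine intervalIntegral.integral_mono_on (by linarith) (by simp) hint fun t ht => ?_
    have hωt := hmono (show (0 : ℝ) ≤ r by linarith) (show (0 : ℝ) ≤ t by linarith [ht.1]) ht.1
    exact div_le_div₀ (hωr.trans hωt) hωt (by positivity) (by nlinarith [ht.1, ht.2])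
  rw [intervalIntegral.integral_const, smul_eq_mul] at hlow
  calc ω r / r = 5 * ((2 * r - r) * (ω r / (5 * r ^ 2))) := by field_simp; ring
    _ ≤ _ := by gcongr

lemma tendsto_integral_two_mul {F : ℝ → ℝ} {a : ℝ}
    (hF : MeasureTheory.IntegrableOn F (Ioi a)) :
    Tendsto (fun r => ∫ t in r..(2 * r), F t) atTop (𝓝 0) := by
  have htail {b : ℝ → ℝ} (hb : Tendsto b atTop atTop) :=
    MeasureTheory.intervalIntegral_tendsto_integral_Ioi a hF hb
  have hdiff := (htail (tendsto_id.const_mul_atTop two_pos)).sub (htail tendsto_id)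
  rw [sub_self] at hdiff
  refine hdiff.congr' ((eventually_ge_atTop (max a 0)).mono fun r hr => ?_)
  have hint {b : ℝ} (hb : a ≤ b) : IntervalIntegrable F MeasureTheory.volume a b := by
    rw [intervalIntegrable_iff_integrableOn_Ioc_of_le hb]
    exact hF.mono_set Ioc_subset_Ioi_self
  obtain ⟨har, h0r⟩ := max_le_iff.1 hr
  exact intervalIntegral.integral_interval_sub_left (hint (by simp; linarith)) (hint har)

lemma IsWeightFun.isLittleO_id (hω : IsWeightFun ω) : ω =o[atTop] (id : ℝ → ℝ) := by
  have hint := hω.beta.mono_set Ioi_subset_Ici_self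
  have hlim := (tendsto_integral_two_mul hint).const_mul 5
  rw [mul_zero] at hlim
  refine Asymptotics.isLittleO_of_tendsto' ((eventually_gt_atTop 0).mono fun r hr h => by
    simp_all) (squeeze_zero' ((eventually_ge_atTop 0).mono fun r hr =>
      div_nonneg (hω.nonneg r hr) hr) ((eventually_ge_atTop 1).mono fun r hr => ?_) hlim)
  refine div_le_integral_of_monotoneOn hω.mono hr (hω.nonneg r (by linarith)) ?_
  rw [intervalIntegrable_iff_integrableOn_Ioc_of_le (by linarith)]
  exact hint.mono_set (Ioc_subset_Ioi_self.trans (Ioi_subset_Ioi hr))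

lemma IsWeightFun.exists_le_mul_add (hω : IsWeightFun ω) {ε : ℝ} (hε : 0 < ε) :
    ∃ C : ℝ, ∀ r, 0 ≤ r → ω r ≤ ε * r + C := by
  obtain ⟨R, hR⟩ := eventually_atTop.1 (hω.isLittleO_id.bound hε)
  have hωR := hω.nonneg |R| (abs_nonneg R)
  refine ⟨ω |R|, fun r hr => ?_⟩
  rcases le_total |R| r with h | h
  · have := (le_abs_self _).trans (hR r ((le_abs_self R).trans h))
    rw [id, Real.norm_of_nonneg hr] at this
    linarith
  · have := hω.mono hr (abs_nonneg R) h
    nlinarith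

lemma IsWeightFun.exists_factorial_mul_pow_le (hω : IsWeightFun ω)
    (hfin : ∀ s, PhiStarFinite ω s) {h l : ℝ} (hh : 1 ≤ h) (hl : 0 < l) :
    ∃ C : ℝ, ∀ n : ℕ, n ! * h ^ n ≤ C * Real.exp (l * phiStar ω (n / l)) := by
  set a : ℝ := Real.log h + 1
  have ha : 0 ≤ a := by have := Real.log_nonneg hh; positivity
  obtain ⟨c, hc⟩ := hω.exists_le_mul_add (ε := 1 / (l * Real.exp a)) (by positivity)
  refine ⟨Real.exp (1 + l * c), fun n => ?_⟩
  have hn : (0 : ℝ) < n + 1 := by positivity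
  have hstar := (hfin (n / l)).le_phiStar (t := Real.log (n + 1) + a)
    (add_nonneg (Real.log_nonneg (by simp)) ha)
  have hωn := hc ((n + 1) * Real.exp a) (by positivity)
  rw [Real.exp_add, Real.exp_log hn] at hstar
  have hexponent : n * Real.log (n + 1) + n * Real.log h ≤
      1 + l * c + l * phiStar ω (n / l) := by
    calc n * Real.log (n + 1) + n * Real.log h
        = 1 + l * c + l * (n / l * (Real.log (n + 1) + a) -
          (1 / (l * Real.exp a) * ((n + 1) * Real.exp a) + c)) := by
          simp only [a]; field_simp; ring
      _ ≤ _ := by gcongr; linarith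
  calc (n ! : ℝ) * h ^ n ≤ ((n : ℝ) + 1) ^ n * h ^ n := by
        gcongr
        exact_mod_cast (Nat.factorial_le_pow n).trans (Nat.pow_le_pow_left n.le_succ n)
    _ = Real.exp (n * Real.log (n + 1) + n * Real.log h) := by
        rw [Real.exp_add, Real.exp_nat_mul, Real.exp_nat_mul, Real.exp_log hn,
          Real.exp_log (by linarith)]
    _ ≤ _ := by rw [← Real.exp_add]; exact Real.exp_le_exp.2 hexponent

lemma le_add_mul_of_not_phiStarFinite (hω : ∀ t, 0 ≤ t → 0 ≤ ω t)
    (hconv : ConvexOn ℝ univ fun t => ω (Real.exp t)) {s : ℝ} (hs : ¬ PhiStarFinite ω s)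
    {t : ℝ} (ht : 0 ≤ t) : ω (Real.exp t) ≤ ω 1 + s * t := by
  obtain ⟨_, ⟨r, hr, rfl⟩, hlt⟩ := not_bddAbove_iff.1 hs (max (|s| * t) (-ω 1))
  obtain ⟨hst, hω₁⟩ := max_lt_iff.1 hlt
  have htr : t ≤ r := by
    by_contra! hrt
    have : s * r ≤ |s| * t := mul_le_mul (le_abs_self s) hrt.le hr (abs_nonneg s)
    linarith [hω _ (Real.exp_pos r).le]
  have hconv' : ConvexOn ℝ univ fun t => ω (Real.exp t) - s * t :=
    hconv.sub ((LinearMap.mul ℝ ℝ s).concaveOn convex_univ)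
  have hmax := hconv'.le_max_of_mem_Icc (mem_univ 0) (mem_univ r) ⟨ht, htr⟩
  rw [Real.exp_zero, mul_zero, sub_zero, max_eq_left (by linarith)] at hmax
  linarith

end Weight

/-! ### Multipliers -/

section Multipliers

variable {N : ℕ} {ω : ℝ → ℝ} {f g : Euc N → ℝ}

lemma MemS.memE (hω : ∀ t, 0 ≤ t → 0 ≤ ω t) (hf : MemS ω f) : MemE ω f := by
  refine ⟨hf.1, fun K _ m hm => ?_⟩
  obtain ⟨C, hC⟩ := hf.2 m 1 (by exact_mod_cast hm) one_pos
  refine ⟨C, fun α x _ => (le_mul_of_one_le_left (abs_nonneg _) ?_).trans (hC α x)⟩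
  exact Real.one_le_exp (by rw [one_mul]; exact hω _ (norm_nonneg x))

lemma MemE.mul (hω : IsWeightFun ω) (hfin : ∀ s, PhiStarFinite ω s)
    (hf : MemE ω f) (hg : MemE ω g) : MemE ω fun x => f x * g x := by
  refine ⟨hf.1.mul hg.1, fun K hK m hm => ?_⟩
  obtain ⟨κ, hκ, hα⟩ := hω.alpha
  obtain ⟨k, hk⟩ := exists_nat_ge κ
  have hk₀ : 0 < k := by exact_mod_cast zero_lt_one.trans_le (hκ.trans hk)
  have hl : 0 < k * m := by positivity
  obtain ⟨A, hA⟩ := hf.2 K hK (k * m) hl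
  obtain ⟨B, hB⟩ := hg.2 K hK (k * m) hl
  set l : ℝ := ((k * m : ℕ) : ℝ) with hl_def
  refine ⟨|A * B| * Real.exp l, fun α x hx => ?_⟩
  have hsplit (i j : ℕ) (hij : i + j = msize α) :
      A * Real.exp (l * phiStar ω (i / l)) * (B * Real.exp (l * phiStar ω (j / l))) ≤
        |A * B| * Real.exp (l * phiStar ω (msize α / l)) := by
    have hadd := phiStar_add_le hω.nonneg (a := i / l) (b := j / l) (by positivity)
      (by positivity) (hfin _)
    rw [← add_div, ← Nat.cast_add, hij] at hadd
    calc _ = A * B * Real.exp (l * (phiStar ω (i / l) + phiStar ω (j / l))) := by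
          rw [mul_add, Real.exp_add]; ring
      _ ≤ _ := by gcongr; exact le_abs_self _
  have hgeom : 2 ^ msize α * Real.exp (l * phiStar ω (msize α / l)) ≤
      Real.exp l * Real.exp (m * phiStar ω (msize α / m)) := by
    rw [hl_def, Nat.cast_mul]
    refine two_pow_mul_exp_phiStar_le (by positivity) (by positivity) (fun t ht => ?_) (hfin _)
    exact (hα t ht).trans (by have := hω.nonneg t ht; gcongr)
  calc |pdm α (fun x => f x * g x) x|
      ≤ 2 ^ msize α * (|A * B| * Real.exp (l * phiStar ω (msize α / l))) :=
        abs_pdm_mul_le hf.1 hg.1 (fun β => hA β x hx) (fun β => hB β x hx) α hsplit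
    _ = |A * B| * (2 ^ msize α * Real.exp (l * phiStar ω (msize α / l))) := by ring
    _ ≤ |A * B| * (Real.exp l * Real.exp (m * phiStar ω (msize α / m))) := by gcongr
    _ = _ := by ring

/-- The multipliers of `𝒮_ω`, without any regularity assumption. -/
def IsMultiplier (ω : ℝ → ℝ) (f : Euc N → ℝ) : Prop :=
  ∀ g, MemS ω g → MemS ω fun x => f x * g x

lemma IsMultiplier.pow (hf : IsMultiplier ω f) (n : ℕ) :
    IsMultiplier ω fun x => f x ^ n := by
  intro g hg
  induction n with
  | zero => simpa using hg
  | succ n ih => simpa only [pow_succ', mul_assoc] using hf _ ih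

end Multipliers

/-! ### Gaussians -/

section Gaussian

open scoped Nat

variable {N : ℕ} {ω : ℝ → ℝ}

lemma contDiff_coord (i : Fin N) : ContDiff ℝ (⊤ : ℕ∞) fun y : Euc N => y i :=
  (EuclideanSpace.proj i : Euc N →L[ℝ] ℝ).contDiff

lemma pd_coord (i j : Fin N) :
    pd j (fun y : Euc N => y i) = fun _ => if i = j then 1 else 0 := by
  funext x
  change fderiv ℝ (EuclideanSpace.proj i : Euc N →L[ℝ] ℝ) x _ = _
  rw [ContinuousLinearMap.fderiv]
  simp

lemma pdm_coord_mul {u : Euc N → ℝ} (hu : ContDiff ℝ (⊤ : ℕ∞) u) (i : Fin N) (β : Fin N → ℕ) :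
    pdm β (fun y => y i * u y) =
      fun x => x i * pdm β u x + β i * pdm (β - Pi.single i 1) u x := by
  induction h : msize β generalizing β u with
  | zero => simp [eq_zero_of_msize_eq_zero h, pdm_zero]
  | succ n ih =>
    obtain ⟨γ, j, hγ, rfl⟩ := exists_eq_add_single h
    have hi := contDiff_coord i
    have huj := contDiff_pd hu j
    rw [pdm_add_single (hi.mul hu), pd_mul hi hu, pd_coord,
      pdm_add (contDiff_const.mul hu) (hi.mul huj), pdm_const_mul hu, ih huj γ hγ,
      pdm_add_single hu]
    funext x
    rcases eq_or_ne i j with rfl | hij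
    · rcases eq_or_ne (γ i) 0 with h0 | h0
      · simp [h0]; ring
      · simp [← pdm_add_single hu, sub_single_add_single h0]; ring
    · have : γ + Pi.single j 1 - Pi.single i 1 = γ - Pi.single i 1 + Pi.single j 1 := by
        funext k
        rcases eq_or_ne k i with rfl | hk <;> simp [*]
      simp [hij, this, pdm_add_single hu]

/-- The Gaussian `exp (s ‖x‖² / 2)`; multiplication by it takes multipliers into `𝒮_ω` for
`s = -1`, and is undone by the case `s = 1`. -/
noncomputable def gauss (s : ℝ) (x : Euc N) : ℝ := Real.exp (s * ‖x‖ ^ 2 / 2)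

lemma contDiff_gauss (s : ℝ) : ContDiff ℝ (⊤ : ℕ∞) (gauss s : Euc N → ℝ) :=
  ((contDiff_const.mul (contDiff_norm_sq ℝ)).div_const 2).exp

lemma pd_gauss (s : ℝ) (i : Fin N) :
    pd i (gauss s : Euc N → ℝ) = fun x => s * (x i * gauss s x) := by
  funext x
  have h := (((hasStrictFDerivAt_norm_sq x).hasFDerivAt.const_mul s).mul_const (1 / 2 : ℝ)).exp
  have hgauss : (gauss s : Euc N → ℝ) = fun x => Real.exp (s * ‖x‖ ^ 2 * (1 / 2)) := by
    funext y
    rw [gauss, mul_one_div]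
  rw [pd, hgauss, h.fderiv]
  simp [EuclideanSpace.inner_single_right]
  ring

lemma abs_pdm_gauss_le_pow {s : ℝ} (hs : |s| ≤ 1) (x : Euc N) (α : Fin N → ℕ) :
    |pdm α (gauss s) x| ≤ (‖x‖ + msize α) ^ msize α * gauss s x := by
  have hpos : 0 < gauss s x := Real.exp_pos _
  have hG := contDiff_gauss (N := N) s
  induction hα : msize α using Nat.strong_induction_on generalizing α with
  | _ n ih =>
  obtain _ | n := n
  · simp [eq_zero_of_msize_eq_zero hα, pdm_zero, abs_of_pos hpos]
  obtain ⟨β, i, hβ, rfl⟩ := exists_eq_add_single hα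
  have hcoord : |x i * pdm β (gauss s) x| ≤ ‖x‖ * ((‖x‖ + n) ^ n * gauss s x) := by
    rw [abs_mul]
    exact mul_le_mul (PiLp.norm_apply_le x i) (ih n n.lt_succ_self β hβ) (abs_nonneg _)
      (norm_nonneg x)
  have hlower : |β i * pdm (β - Pi.single i 1) (gauss s) x| ≤ (‖x‖ + n) ^ n * gauss s x := by
    rcases eq_or_ne (β i) 0 with h | h
    · rw [h, Nat.cast_zero, zero_mul, abs_zero]
      positivity
    obtain ⟨m, hm⟩ : ∃ m, msize (β - Pi.single i 1) = m := ⟨_, rfl⟩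
    obtain rfl : m + 1 = n := by rw [← hm, msize_sub_single h, hβ]
    have hcoef : (β i : ℝ) ≤ ‖x‖ + (m + 1 : ℕ) :=
      (Nat.cast_le.2 (hβ ▸ apply_le_msize β i)).trans (le_add_of_nonneg_left (norm_nonneg x))
    rw [abs_mul, Nat.abs_cast, pow_succ', mul_assoc]
    refine mul_le_mul hcoef ((ih m (by omega) _ hm).trans ?_) (abs_nonneg _) (by positivity)
    gcongr
    exact m.le_succ
  have hpd : pdm (β + Pi.single i 1) (gauss s) x =
      s * (x i * pdm β (gauss s) x + β i * pdm (β - Pi.single i 1) (gauss s) x) := by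
    rw [pdm_add_single hG, pd_gauss, pdm_const_mul ((contDiff_coord i).mul hG),
      pdm_coord_mul hG]
  calc |pdm (β + Pi.single i 1) (gauss s) x|
      ≤ |x i * pdm β (gauss s) x + β i * pdm (β - Pi.single i 1) (gauss s) x| := by
        rw [hpd, abs_mul]
        exact mul_le_of_le_one_left (abs_nonneg _) hs
    _ ≤ ‖x‖ * ((‖x‖ + n) ^ n * gauss s x) + (‖x‖ + n) ^ n * gauss s x :=
        (abs_add_le _ _).trans (add_le_add hcoord hlower)
    _ = (‖x‖ + 1) * (‖x‖ + n) ^ n * gauss s x := by ring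
    _ ≤ (‖x‖ + (n + 1 : ℕ)) * (‖x‖ + (n + 1 : ℕ)) ^ n * gauss s x := by
        gcongr <;> simp
    _ = (‖x‖ + (n + 1 : ℕ)) ^ (n + 1) * gauss s x := by ring

lemma abs_pdm_gauss_le {s : ℝ} (hs : |s| ≤ 1) (x : Euc N) (α : Fin N → ℕ) :
    |pdm α (gauss s) x| ≤
      (msize α)! * Real.exp 1 ^ msize α * (Real.exp ‖x‖ * gauss s x) := by
  have h := Real.pow_div_factorial_le_exp (‖x‖ + msize α) (by positivity) (msize α)
  rw [div_le_iff₀ (by positivity)] at h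
  calc _ ≤ (‖x‖ + msize α) ^ msize α * gauss s x := abs_pdm_gauss_le_pow hs x α
    _ ≤ Real.exp (‖x‖ + msize α) * (msize α)! * gauss s x := by
        gcongr; exact (Real.exp_pos _).le
    _ = _ := by rw [Real.exp_add, ← Real.exp_nat_mul, mul_one]; ring

lemma exp_mul_gauss_neg_one_le (a : ℝ) (x : Euc N) :
    Real.exp (a * ‖x‖) * gauss (-1) x ≤ Real.exp (a ^ 2 / 2) := by
  rw [gauss, ← Real.exp_add, Real.exp_le_exp]
  nlinarith [sq_nonneg (‖x‖ - a)]

lemma memS_gauss_neg_one (hω : IsWeightFun ω) (hfin : ∀ s, PhiStarFinite ω s) :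
    MemS ω (gauss (-1) : Euc N → ℝ) := by
  refine ⟨contDiff_gauss _, fun l μ hl hμ => ?_⟩
  obtain ⟨C, hC⟩ := hω.exists_factorial_mul_pow_le hfin (Real.one_le_exp zero_le_one) hl
  obtain ⟨c, hc⟩ := hω.exists_le_mul_add one_pos
  refine ⟨Real.exp (μ * c + (μ + 1) ^ 2 / 2) * C, fun α x => ?_⟩
  have hdecay : Real.exp (μ * ω ‖x‖) * (Real.exp ‖x‖ * gauss (-1) x) ≤
      Real.exp (μ * c + (μ + 1) ^ 2 / 2) := by
    calc _ ≤ Real.exp (μ * (1 * ‖x‖ + c)) * (Real.exp ‖x‖ * gauss (-1) x) := by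
          gcongr
          · exact mul_nonneg (Real.exp_pos _).le (Real.exp_pos _).le
          · exact hc _ (norm_nonneg x)
      _ = Real.exp (μ * c) * (Real.exp ((μ + 1) * ‖x‖) * gauss (-1) x) := by
          rw [mul_add, Real.exp_add, add_mul, Real.exp_add, one_mul]; ring
      _ ≤ _ := by rw [Real.exp_add]; gcongr; exact exp_mul_gauss_neg_one_le _ x
  calc Real.exp (μ * ω ‖x‖) * |pdm α (gauss (-1)) x|
      ≤ Real.exp (μ * ω ‖x‖) * ((msize α)! * Real.exp 1 ^ msize α *
          (Real.exp ‖x‖ * gauss (-1) x)) := by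
        gcongr; exact abs_pdm_gauss_le (by simp) x α
    _ = Real.exp (μ * ω ‖x‖) * (Real.exp ‖x‖ * gauss (-1) x) *
          ((msize α)! * Real.exp 1 ^ msize α) := by ring
    _ ≤ Real.exp (μ * c + (μ + 1) ^ 2 / 2) * (C * Real.exp (l * phiStar ω (msize α / l))) :=
        mul_le_mul hdecay (hC _) (by positivity) (by positivity)
    _ = _ := by ring

lemma memE_gauss (hω : IsWeightFun ω) (hfin : ∀ s, PhiStarFinite ω s) {s : ℝ} (hs : |s| ≤ 1) :
    MemE ω (gauss s : Euc N → ℝ) := by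
  refine ⟨contDiff_gauss s, fun K hK m hm => ?_⟩
  obtain ⟨C, hC⟩ := hω.exists_factorial_mul_pow_le hfin (Real.one_le_exp zero_le_one)
    (show (0 : ℝ) < m by exact_mod_cast hm)
  obtain ⟨B, hB⟩ := hK.exists_bound_of_continuousOn (f := fun x => Real.exp ‖x‖ * gauss s x)
    (by have := (contDiff_gauss (N := N) s).continuous; fun_prop)
  refine ⟨C * B, fun α x hx => ?_⟩
  have hBx := (le_abs_self _).trans (hB x hx)
  calc |pdm α (gauss s) x|
      ≤ (msize α)! * Real.exp 1 ^ msize α * (Real.exp ‖x‖ * gauss s x) := abs_pdm_gauss_le hs x α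
    _ ≤ C * Real.exp (m * phiStar ω (msize α / m)) * B :=
        mul_le_mul (hC _) hBx (mul_nonneg (Real.exp_pos _).le (Real.exp_pos _).le)
          ((by positivity : (0 : ℝ) ≤ _).trans (hC _))
    _ = _ := by ring

lemma IsMultiplier.memE_of_phiStarFinite (hω : IsWeightFun ω) (hfin : ∀ s, PhiStarFinite ω s)
    {f : Euc N → ℝ} (hf : IsMultiplier ω f) : MemE ω f := by
  have hfac : f = fun x => f x * gauss (-1) x * gauss 1 x := by
    funext x
    rw [gauss, gauss, mul_assoc, ← Real.exp_add, neg_mul, neg_div, neg_add_cancel, Real.exp_zero,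
      mul_one]
  rw [hfac]
  exact ((hf _ (memS_gauss_neg_one hω hfin)).memE hω.nonneg).mul hω hfin
    (memE_gauss hω hfin (by simp))

end Gaussian

/-! ### Rapidly decreasing functions of exponential type -/

section ExpTypeDecay

open scoped ContDiff

variable {E F : Type*} [NormedAddCommGroup E] [NormedSpace ℝ E]
  [NormedAddCommGroup F] [NormedSpace ℝ F]

/-- Rapidly decreasing smooth functions all of whose `k`-th derivatives are `O(r ^ k)`; up to the
rate `r` this is the class of Schwartz functions with compactly supported Fourier transform. -/
structure ExpTypeDecay (r : ℝ) (g : E → F) : Prop where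
  contDiff : ContDiff ℝ ∞ g
  bound : ∀ n : ℕ, ∃ C : ℝ, ∀ (k : ℕ) (x : E),
    (1 + ‖x‖) ^ n * ‖iteratedFDeriv ℝ k g x‖ ≤ C * r ^ k

namespace ExpTypeDecay

variable {r s : ℝ} {g : E → F}

lemma of_norm_pow_mul_le (hg : ContDiff ℝ ∞ g)
    (hbound : ∀ n : ℕ, ∃ C : ℝ, ∀ (k : ℕ) (x : E),
      ‖x‖ ^ n * ‖iteratedFDeriv ℝ k g x‖ ≤ C * r ^ k) : ExpTypeDecay r g := by
  refine ⟨hg, fun n => ?_⟩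
  obtain ⟨C₀, hC₀⟩ := hbound 0
  obtain ⟨C, hC⟩ := hbound n
  refine ⟨2 ^ (n - 1) * (C₀ + C), fun k x => ?_⟩
  have hpow : (1 + ‖x‖) ^ n ≤ 2 ^ (n - 1) * (1 + ‖x‖ ^ n) := by
    simpa using add_pow_le zero_le_one (norm_nonneg x) n
  calc (1 + ‖x‖) ^ n * ‖iteratedFDeriv ℝ k g x‖
      ≤ 2 ^ (n - 1) * (1 + ‖x‖ ^ n) * ‖iteratedFDeriv ℝ k g x‖ := by gcongr
    _ = 2 ^ (n - 1) * (‖x‖ ^ 0 * ‖iteratedFDeriv ℝ k g x‖ +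
          ‖x‖ ^ n * ‖iteratedFDeriv ℝ k g x‖) := by ring
    _ ≤ 2 ^ (n - 1) * (C₀ * r ^ k + C * r ^ k) :=
        mul_le_mul_of_nonneg_left (add_le_add (hC₀ k x) (hC k x)) (by positivity)
    _ = 2 ^ (n - 1) * (C₀ + C) * r ^ k := by ring

lemma exists_norm_le (hg : ExpTypeDecay r g) (n : ℕ) :
    ∃ C : ℝ, ∀ x, (1 + ‖x‖) ^ n * ‖g x‖ ≤ C := by
  obtain ⟨C, hC⟩ := hg.bound n
  exact ⟨C, fun x => by simpa using hC 0 x⟩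

lemma mono (hr : 0 ≤ r) (hrs : r ≤ s) (hg : ExpTypeDecay r g) : ExpTypeDecay s g := by
  refine ⟨hg.contDiff, fun n => ?_⟩
  obtain ⟨C, hC⟩ := hg.bound n
  refine ⟨|C|, fun k x => (hC k x).trans ?_⟩
  gcongr
  exact le_abs_self C

lemma clm_comp {G : Type*} [NormedAddCommGroup G] [NormedSpace ℝ G] (L : F →L[ℝ] G)
    (hg : ExpTypeDecay r g) : ExpTypeDecay r fun x => L (g x) := by
  refine ⟨L.contDiff.comp hg.contDiff, fun n => ?_⟩
  obtain ⟨C, hC⟩ := hg.bound n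
  refine ⟨‖L‖ * C, fun k x => ?_⟩
  calc (1 + ‖x‖) ^ n * ‖iteratedFDeriv ℝ k (L ∘ g) x‖
      ≤ (1 + ‖x‖) ^ n * (‖L‖ * ‖iteratedFDeriv ℝ k g x‖) := by
        gcongr
        exact L.norm_iteratedFDeriv_comp_left hg.contDiff.contDiffAt (mod_cast le_top)
    _ = ‖L‖ * ((1 + ‖x‖) ^ n * ‖iteratedFDeriv ℝ k g x‖) := by ring
    _ ≤ ‖L‖ * (C * r ^ k) := mul_le_mul_of_nonneg_left (hC k x) (norm_nonneg L)
    _ = ‖L‖ * C * r ^ k := by ring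

lemma comp_smul (hg : ExpTypeDecay r g) {c : ℝ} (hc : 0 < c) (hc' : c ≤ 1) :
    ExpTypeDecay (c * r) fun x => g (c • x) := by
  refine ⟨hg.contDiff.comp (contDiff_const_smul c), fun n => ?_⟩
  obtain ⟨C, hC⟩ := hg.bound n
  refine ⟨(1 / c) ^ n * C, fun k x => ?_⟩
  rw [iteratedFDeriv_comp_const_smul c (hg.contDiff.of_le (mod_cast le_top)), norm_smul,
    norm_pow, Real.norm_of_nonneg hc.le]
  have hdilate : 1 + ‖x‖ ≤ 1 / c * (1 + ‖c • x‖) := by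
    rw [norm_smul, Real.norm_of_nonneg hc.le, one_div, mul_add, inv_mul_cancel_left₀ hc.ne']
    simpa using (one_le_inv₀ hc).2 hc'
  calc (1 + ‖x‖) ^ n * (c ^ k * ‖iteratedFDeriv ℝ k g (c • x)‖)
      ≤ (1 / c * (1 + ‖c • x‖)) ^ n * (c ^ k * ‖iteratedFDeriv ℝ k g (c • x)‖) := by gcongr
    _ = (1 / c) ^ n * c ^ k * ((1 + ‖c • x‖) ^ n * ‖iteratedFDeriv ℝ k g (c • x)‖) := by
        rw [mul_pow]; ring
    _ ≤ (1 / c) ^ n * c ^ k * (C * r ^ k) :=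
        mul_le_mul_of_nonneg_left (hC k _) (by positivity)
    _ = (1 / c) ^ n * C * (c * r) ^ k := by ring

lemma exists_bound_comp_sub (hg : ExpTypeDecay r g) (n : ℕ) :
    ∃ C : ℝ, ∀ (a : E) (k : ℕ) (x : E),
      (1 + ‖x‖) ^ n * ‖iteratedFDeriv ℝ k (fun y => g (y - a)) x‖ ≤
        C * (1 + ‖a‖) ^ n * r ^ k := by
  obtain ⟨C, hC⟩ := hg.bound n
  refine ⟨C, fun a k x => ?_⟩
  have hshift : 1 + ‖x‖ ≤ (1 + ‖a‖) * (1 + ‖x - a‖) := by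
    nlinarith [norm_le_norm_add_norm_sub' x a, norm_nonneg a, norm_nonneg (x - a)]
  rw [iteratedFDeriv_comp_sub]
  calc (1 + ‖x‖) ^ n * ‖iteratedFDeriv ℝ k g (x - a)‖
      ≤ ((1 + ‖a‖) * (1 + ‖x - a‖)) ^ n * ‖iteratedFDeriv ℝ k g (x - a)‖ := by gcongr
    _ = (1 + ‖a‖) ^ n * ((1 + ‖x - a‖) ^ n * ‖iteratedFDeriv ℝ k g (x - a)‖) := by
        rw [mul_pow]; ring
    _ ≤ (1 + ‖a‖) ^ n * (C * r ^ k) :=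
        mul_le_mul_of_nonneg_left (hC k _) (by positivity)
    _ = C * (1 + ‖a‖) ^ n * r ^ k := by ring

lemma comp_sub (hg : ExpTypeDecay r g) (a : E) : ExpTypeDecay r fun x => g (x - a) := by
  refine ⟨hg.contDiff.comp (contDiff_id.sub contDiff_const), fun n => ?_⟩
  obtain ⟨C, hC⟩ := hg.exists_bound_comp_sub n
  exact ⟨_, hC a⟩

lemma tsum_smul_comp_sub [CompleteSpace F] {ι : Type*} {c : ι → ℝ} {a : ι → E}
    (hg : ExpTypeDecay r g) (hc : ∀ n : ℕ, Summable fun j => |c j| * (1 + ‖a j‖) ^ n) :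
    ExpTypeDecay r fun x => ∑' j, c j • g (x - a j) := by
  have hG (j : ι) : ContDiff ℝ ∞ fun x => c j • g (x - a j) :=
    (hg.comp_sub (a j)).contDiff.const_smul (c j)
  have hterm (n : ℕ) : ∃ C : ℝ, ∀ (k : ℕ) (j : ι) (x : E),
      (1 + ‖x‖) ^ n * ‖iteratedFDeriv ℝ k (fun x => c j • g (x - a j)) x‖ ≤
        C * r ^ k * (|c j| * (1 + ‖a j‖) ^ n) := by
    obtain ⟨C, hC⟩ := hg.exists_bound_comp_sub n
    refine ⟨C, fun k j x => ?_⟩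
    rw [iteratedFDeriv_const_smul_apply'
      ((hg.comp_sub (a j)).contDiff.of_le (mod_cast le_top)).contDiffAt, norm_smul,
      Real.norm_eq_abs, mul_left_comm]
    exact (mul_le_mul_of_nonneg_left (hC (a j) k x) (abs_nonneg _)).trans_eq (by ring)
  obtain ⟨C₀, hC₀⟩ := hterm 0
  simp only [pow_zero, one_mul] at hC₀
  have hsum (C : ℝ) (n : ℕ) := (hc n).mul_left C
  refine ⟨contDiff_tsum (N := ⊤) hG (fun k _ => hsum (C₀ * r ^ k) 0)
    fun k j x _ => by simpa using hC₀ k j x, fun n => ?_⟩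
  obtain ⟨C, hC⟩ := hterm n
  refine ⟨C * ∑' j, |c j| * (1 + ‖a j‖) ^ n, fun k x => ?_⟩
  rw [iteratedFDeriv_tsum_apply (N := ⊤) hG (fun k _ => hsum (C₀ * r ^ k) 0)
    (fun k j x _ => by simpa using hC₀ k j x) le_top x]
  have hnorm : Summable fun j => ‖iteratedFDeriv ℝ k (fun x => c j • g (x - a j)) x‖ :=
    (hsum (C₀ * r ^ k) 0).of_nonneg_of_le (fun _ => norm_nonneg _)
      fun j => by simpa using hC₀ k j x
  calc (1 + ‖x‖) ^ n * ‖∑' j, iteratedFDeriv ℝ k (fun x => c j • g (x - a j)) x‖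
      ≤ (1 + ‖x‖) ^ n * ∑' j, ‖iteratedFDeriv ℝ k (fun x => c j • g (x - a j)) x‖ := by
        gcongr; exact norm_tsum_le_tsum_norm hnorm
    _ = ∑' j, (1 + ‖x‖) ^ n * ‖iteratedFDeriv ℝ k (fun x => c j • g (x - a j)) x‖ :=
        tsum_mul_left.symm
    _ ≤ ∑' j, C * r ^ k * (|c j| * (1 + ‖a j‖) ^ n) :=
        (hnorm.mul_left _).tsum_le_tsum (fun j => hC k j x) (hsum _ n)
    _ = C * (∑' j, |c j| * (1 + ‖a j‖) ^ n) * r ^ k := by rw [tsum_mul_left]; ring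

section Mul

variable {A : Type*} [NormedRing A] [NormedAlgebra ℝ A] {f g : E → A}

lemma mul (hf : ExpTypeDecay r f) (hg : ExpTypeDecay s g) :
    ExpTypeDecay (r + s) fun x => f x * g x := by
  refine ⟨hf.contDiff.mul hg.contDiff, fun n => ?_⟩
  obtain ⟨C, hC⟩ := hf.bound n
  obtain ⟨D, hD⟩ := hg.bound 0
  simp only [pow_zero, one_mul] at hD
  refine ⟨C * D, fun k x => ?_⟩
  calc (1 + ‖x‖) ^ n * ‖iteratedFDeriv ℝ k (fun y => f y * g y) x‖
      ≤ (1 + ‖x‖) ^ n * ∑ i ∈ Finset.range (k + 1), (k.choose i : ℝ) *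
          ‖iteratedFDeriv ℝ i f x‖ * ‖iteratedFDeriv ℝ (k - i) g x‖ := by
        gcongr
        exact norm_iteratedFDeriv_mul_le hf.contDiff hg.contDiff x (mod_cast le_top)
    _ = ∑ i ∈ Finset.range (k + 1), (k.choose i : ℝ) *
          ((1 + ‖x‖) ^ n * ‖iteratedFDeriv ℝ i f x‖ * ‖iteratedFDeriv ℝ (k - i) g x‖) := by
        rw [Finset.mul_sum]
        exact Finset.sum_congr rfl fun i _ => by ring
    _ ≤ ∑ i ∈ Finset.range (k + 1), (k.choose i : ℝ) * (C * r ^ i * (D * s ^ (k - i))) := by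
        refine Finset.sum_le_sum fun i _ => mul_le_mul_of_nonneg_left ?_ (Nat.cast_nonneg _)
        exact mul_le_mul (hC i x) (hD (k - i) x) (norm_nonneg _)
          ((by positivity : (0 : ℝ) ≤ _).trans (hC i x))
    _ = C * D * (r + s) ^ k := by
        rw [add_pow, Finset.mul_sum]
        exact Finset.sum_congr rfl fun i _ => by ring

lemma pow_succ (hg : ExpTypeDecay r g) (n : ℕ) :
    ExpTypeDecay ((n + 1 : ℕ) * r) fun x => g x ^ (n + 1) := by
  induction n with
  | zero => simpa using hg
  | succ n ih =>
    have hmul := ih.mul hg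
    simp only [← _root_.pow_succ] at hmul
    convert hmul using 1
    push_cast
    ring

end Mul

end ExpTypeDecay

section Fourier

open MeasureTheory
open scoped FourierTransform Nat

lemma hasCompactSupport_of_tsupport_subset_closedBall {X Y : Type*} [PseudoMetricSpace X]
    [ProperSpace X] [Zero Y] {f : X → Y} {x : X} {R : ℝ}
    (hR : tsupport f ⊆ Metric.closedBall x R) : HasCompactSupport f :=
  (isCompact_closedBall x R).of_isClosed_subset (isClosed_tsupport f) hR

variable {V H : Type*} [NormedAddCommGroup V] [InnerProductSpace ℝ V] [FiniteDimensional ℝ V]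
  [MeasurableSpace V] [BorelSpace V] [NormedAddCommGroup H] [NormedSpace ℂ H]

lemma integrable_norm_pow_mul_norm_iteratedFDeriv {β : V → H}
    (hβ : ContDiff ℝ ∞ β) (hsupp : HasCompactSupport β) (p q : ℕ) :
    Integrable fun v => ‖v‖ ^ p * ‖iteratedFDeriv ℝ q β v‖ :=
  ((continuous_norm.pow p).mul
    (hβ.continuous_iteratedFDeriv (mod_cast le_top)).norm).integrable_of_hasCompactSupport
      (hsupp.iteratedFDeriv (𝕜 := ℝ) q).norm.mul_left

lemma integral_norm_pow_mul_norm_iteratedFDeriv_le {β : V → H} (hβ : ContDiff ℝ ∞ β) {R : ℝ}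
    (hR : tsupport β ⊆ Metric.closedBall 0 R) (hR' : 1 ≤ R) {p k : ℕ} (hp : p ≤ k) (q : ℕ) :
    ∫ v, ‖v‖ ^ p * ‖iteratedFDeriv ℝ q β v‖ ≤ R ^ k * ∫ v, ‖iteratedFDeriv ℝ q β v‖ := by
  have hint := integrable_norm_pow_mul_norm_iteratedFDeriv hβ
    (hasCompactSupport_of_tsupport_subset_closedBall hR)
  rw [← integral_const_mul]
  refine integral_mono (hint p q) (by simpa using (hint 0 q).const_mul (R ^ k)) fun v => ?_
  by_cases hv : v ∈ tsupport β
  · have : ‖v‖ ≤ R := mem_closedBall_zero_iff.1 (hR hv)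
    dsimp only
    gcongr
    exact (pow_le_pow_left₀ (norm_nonneg v) this p).trans (pow_le_pow_right₀ hR' hp)
  · have : iteratedFDeriv ℝ q β v = 0 := by
      by_contra h
      exact hv (support_iteratedFDeriv_subset q (Function.mem_support.2 h))
    simp [this]

lemma norm_pow_mul_norm_iteratedFDeriv_fourier_le {β : V → H} (hβ : ContDiff ℝ ∞ β) {R : ℝ}
    (hR : tsupport β ⊆ Metric.closedBall 0 R) (hR' : 1 ≤ R) (n k : ℕ) (x : V) :
    ‖x‖ ^ n * ‖iteratedFDeriv ℝ k (𝓕 β) x‖ ≤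
      (n + 1)! * Real.exp 2 *
        (∑ q ∈ Finset.range (n + 1), ∫ v, ‖iteratedFDeriv ℝ q β v‖) *
        (2 * π * Real.exp 2 * R) ^ k := by
  set A := ∑ q ∈ Finset.range (n + 1), ∫ v, ‖iteratedFDeriv ℝ q β v‖
  have hsum : ∑ p ∈ Finset.range (k + 1) ×ˢ Finset.range (n + 1),
      ∫ v, ‖v‖ ^ p.1 * ‖iteratedFDeriv ℝ p.2 β v‖ ≤ (2 * k + 2) * (R ^ k * A) := by
    rw [Finset.sum_product]
    calc _ ≤ ∑ _p ∈ Finset.range (k + 1), ∑ q ∈ Finset.range (n + 1),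
          R ^ k * ∫ v, ‖iteratedFDeriv ℝ q β v‖ :=
        Finset.sum_le_sum fun p hp => Finset.sum_le_sum fun q _ =>
          integral_norm_pow_mul_norm_iteratedFDeriv_le hβ hR hR'
            (Nat.lt_succ_iff.1 (Finset.mem_range.1 hp)) q
      _ = (k + 1) * (R ^ k * A) := by
        rw [Finset.sum_const, ← Finset.mul_sum, Finset.card_range, nsmul_eq_mul, Nat.cast_succ]
      _ ≤ (2 * k + 2) * (R ^ k * A) := by gcongr <;> linarith [(k.cast_nonneg : (0 : ℝ) ≤ k)]
  have hpow : (2 * k + 2 : ℝ) ^ (n + 1) ≤ Real.exp (2 * k + 2) * (n + 1)! :=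
    (div_le_iff₀ (by positivity)).1 (Real.pow_div_factorial_le_exp _ (by positivity) (n + 1))
  calc ‖x‖ ^ n * ‖iteratedFDeriv ℝ k (𝓕 β) x‖
      ≤ (2 * π) ^ k * (2 * k + 2) ^ n * _ :=
        Real.pow_mul_norm_iteratedFDeriv_fourier_le (K := ⊤) hβ
          (fun p q _ _ => integrable_norm_pow_mul_norm_iteratedFDeriv hβ
            (hasCompactSupport_of_tsupport_subset_closedBall hR) p q) le_top le_top x
    _ ≤ (2 * π) ^ k * (2 * k + 2) ^ n * ((2 * k + 2) * (R ^ k * A)) := by gcongr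
    _ = (2 * π) ^ k * R ^ k * A * (2 * k + 2) ^ (n + 1) := by ring
    _ ≤ (2 * π) ^ k * R ^ k * A * (Real.exp (2 * k + 2) * (n + 1)!) := by gcongr
    _ = (n + 1)! * Real.exp 2 * A * (2 * π * Real.exp 2 * R) ^ k := by
        rw [Real.exp_add, mul_comm (2 : ℝ) (k : ℝ), Real.exp_nat_mul]
        ring

lemma exists_expTypeDecay_fourier {β : V → H} (hβ : ContDiff ℝ ∞ β) (hsupp : HasCompactSupport β) :
    ∃ r, 0 ≤ r ∧ ExpTypeDecay r (𝓕 β) := by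
  obtain ⟨R, hR⟩ := hsupp.isCompact.isBounded.subset_closedBall 0
  have hR' := hR.trans (Metric.closedBall_subset_closedBall (le_max_left R 1))
  refine ⟨2 * π * Real.exp 2 * max R 1, by positivity, .of_norm_pow_mul_le ?_ fun n => ⟨_,
    norm_pow_mul_norm_iteratedFDeriv_fourier_le hβ hR' (le_max_right R 1) n⟩⟩
  exact Real.contDiff_fourier fun n _ => by
    simpa using integrable_norm_pow_mul_norm_iteratedFDeriv hβ hsupp n 0

lemma exists_expTypeDecay_one : ∃ g : V → ℝ, ExpTypeDecay 1 g ∧ g 0 = 1 := by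
  let b : ContDiffBump (0 : V) := ⟨1, 2, one_pos, one_lt_two⟩
  obtain ⟨r, hr, hF⟩ := exists_expTypeDecay_fourier (β := fun v => (b v : ℂ))
    (Complex.ofRealCLM.contDiff.comp b.contDiff)
    (b.hasCompactSupport.comp_left (g := Complex.ofReal) rfl)
  set F : V → ℂ := 𝓕 fun v => (b v : ℂ) with hF_def
  have hF₀ : F 0 = (∫ v, b v : ℝ) := by
    simp [hF_def, Real.fourier_eq, integral_complex_ofReal]
  have hr' : 0 < 1 + r := by positivity
  refine ⟨fun x => ((∫ v, b v)⁻¹ • Complex.reCLM) (F ((1 + r)⁻¹ • x)),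
    .clm_comp _ ((hF.comp_smul (inv_pos.2 hr') (inv_le_one_of_one_le₀ (by linarith))).mono
      (by positivity) ((inv_mul_le_iff₀ hr').2 (by linarith))), ?_⟩
  simp [hF₀, inv_mul_cancel₀ b.integral_pos.ne']

end Fourier

end ExpTypeDecay

/-! ### Weights of logarithmic growth -/

section LogarithmicWeight

open scoped Nat

variable {V : Type*} [NormedAddCommGroup V] [InnerProductSpace ℝ V] [FiniteDimensional ℝ V]
  [MeasurableSpace V] [BorelSpace V]

lemma exists_nonneg_expTypeDecay_one :
    ∃ g : V → ℝ, ExpTypeDecay 1 g ∧ (∀ x, 0 ≤ g x) ∧ g 0 = 1 := by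
  obtain ⟨ψ, hψ, hψ₀⟩ := exists_expTypeDecay_one (V := V)
  refine ⟨fun x => ψ ((1 / 2 : ℝ) • x) ^ 2, ?_, fun x => sq_nonneg _, by simp [hψ₀]⟩
  exact ((hψ.comp_smul (c := 1 / 2) (by norm_num) (by norm_num)).pow_succ 1).mono
    (by norm_num) (by norm_num)

lemma summable_half_pow_mul_inv_pow_mul_pow {u : ℕ → ℝ} (hu : ∀ j, 1 ≤ u j) (n : ℕ) :
    Summable fun j => (1 / 2 : ℝ) ^ j * (u j ^ j)⁻¹ * u j ^ n := by
  refine summable_geometric_two.of_norm_bounded_eventually_nat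
    ((eventually_ge_atTop n).mono fun j hj => ?_)
  have hu₀ := zero_lt_one.trans_le (hu j)
  rw [Real.norm_of_nonneg (by positivity), mul_assoc]
  exact mul_le_of_le_one_right (by positivity)
    ((inv_mul_le_one₀ (by positivity)).2 (pow_le_pow_right₀ (hu j) hj))

lemma exists_expTypeDecay_ge (x : ℕ → V) :
    ∃ g : V → ℝ, ExpTypeDecay 1 g ∧ ∀ j, (1 / 2) ^ j * ((1 + ‖x j‖) ^ j)⁻¹ ≤ g (x j) := by
  obtain ⟨ψ, hψ, hψ_nonneg, hψ₀⟩ := exists_nonneg_expTypeDecay_one (V := V)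
  set c : ℕ → ℝ := fun j => (1 / 2) ^ j * ((1 + ‖x j‖) ^ j)⁻¹
  have hc (j : ℕ) : 0 ≤ c j := by positivity
  have hc_summable (n : ℕ) : Summable fun j => |c j| * (1 + ‖x j‖) ^ n := by
    simpa only [abs_of_nonneg (hc _)] using summable_half_pow_mul_inv_pow_mul_pow
      (fun j => le_add_of_nonneg_right (norm_nonneg (x j))) n
  refine ⟨fun y => ∑' j, c j • ψ (y - x j), hψ.tsum_smul_comp_sub hc_summable, fun j => ?_⟩
  obtain ⟨C, hC⟩ := hψ.exists_norm_le 0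
  have hsum : Summable fun i => c i • ψ (x j - x i) := by
    refine ((hc_summable 0).mul_right C).of_norm_bounded fun i => ?_
    rw [norm_smul, pow_zero, mul_one, Real.norm_eq_abs]
    exact mul_le_mul_of_nonneg_left (by simpa using hC (x j - x i)) (abs_nonneg _)
  calc c j = c j • ψ (x j - x j) := by rw [sub_self, hψ₀, smul_eq_mul, mul_one]
    _ ≤ ∑' i, c i • ψ (x j - x i) :=
        hsum.le_tsum j fun i _ => mul_nonneg (hc i) (hψ_nonneg _)

variable {N : ℕ} {ω : ℝ → ℝ} {s : ℝ} {f g : Euc N → ℝ}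

lemma one_le_exp_mul_exp_phiStar (hω : 0 ≤ ω 1) {l : ℝ} (hl : 0 ≤ l) (s : ℝ) :
    1 ≤ Real.exp (l * ω 1) * Real.exp (l * phiStar ω s) := by
  rw [← Real.exp_add, ← mul_add]
  exact Real.one_le_exp (mul_nonneg hl (neg_le_iff_add_nonneg'.1 (neg_le_phiStar hω s)))

lemma IsWeightFun.exists_exp_mul_le_pow (hω : IsWeightFun ω) (hs : ¬ PhiStarFinite ω s) {μ : ℝ}
    (hμ : 0 ≤ μ) :
    ∃ n : ℕ, ∀ t, 0 ≤ t → Real.exp (μ * ω t) ≤ Real.exp (μ * ω 1) * (1 + t) ^ n := by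
  obtain ⟨n, hn⟩ := exists_nat_ge (μ * s)
  refine ⟨n, fun t ht => ?_⟩
  have ht' : 0 < 1 + t := by positivity
  have hlog : 0 ≤ Real.log (1 + t) := Real.log_nonneg (le_add_of_nonneg_right ht)
  have hgrowth : ω t ≤ ω 1 + s * Real.log (1 + t) := by
    have := le_add_mul_of_not_phiStarFinite hω.nonneg hω.delta hs hlog
    rw [Real.exp_log ht'] at this
    exact (hω.mono ht ht'.le (le_add_of_nonneg_left zero_le_one)).trans this
  calc Real.exp (μ * ω t) ≤ Real.exp (μ * (ω 1 + s * Real.log (1 + t))) := by gcongr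
    _ = Real.exp (μ * ω 1 + μ * s * Real.log (1 + t)) := by ring_nf
    _ ≤ Real.exp (μ * ω 1 + n * Real.log (1 + t)) := by gcongr
    _ = Real.exp (μ * ω 1) * (1 + t) ^ n := by
        rw [Real.exp_add, Real.exp_nat_mul, Real.exp_log ht']

lemma ExpTypeDecay.memS (hω : IsWeightFun ω) (hs : ¬ PhiStarFinite ω s)
    (hg : ExpTypeDecay 1 g) : MemS ω g := by
  refine ⟨hg.contDiff, fun l μ hl hμ => ?_⟩
  obtain ⟨n, hn⟩ := hω.exists_exp_mul_le_pow hs hμ.le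
  obtain ⟨C, hC⟩ := hg.bound n
  simp only [one_pow, mul_one] at hC
  have hC₀ : 0 ≤ C := (by positivity : (0 : ℝ) ≤ _).trans (hC 0 0)
  refine ⟨Real.exp (μ * ω 1) * C * Real.exp (l * ω 1), fun α x => ?_⟩
  calc Real.exp (μ * ω ‖x‖) * |pdm α g x|
      ≤ Real.exp (μ * ω 1) * (1 + ‖x‖) ^ n * ‖iteratedFDeriv ℝ (msize α) g x‖ := by
        gcongr
        · exact hn _ (norm_nonneg x)
        · exact abs_pdm_le_norm_iteratedFDeriv hg.contDiff α x
    _ ≤ Real.exp (μ * ω 1) * C := by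
        rw [mul_assoc]
        exact mul_le_mul_of_nonneg_left (hC (msize α) x) (Real.exp_pos _).le
    _ ≤ Real.exp (μ * ω 1) * C *
          (Real.exp (l * ω 1) * Real.exp (l * phiStar ω (msize α / l))) :=
        le_mul_of_one_le_right (by positivity)
          (one_le_exp_mul_exp_phiStar (hω.nonneg 1 zero_le_one) hl.le _)
    _ = _ := (mul_assoc _ _ _).symm

lemma bddAbove_range_phiStar_natCast (hs : ¬ PhiStarFinite ω s) :
    BddAbove (range fun n : ℕ => phiStar ω n) := by
  obtain ⟨n₀, hn₀⟩ := exists_nat_ge s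
  refine (tendsto_const_nhds.congr' (f₁ := fun _ : ℕ => (0 : ℝ))
    ((eventually_ge_atTop n₀).mono fun n hn => ?_)).bddAbove_range
  exact (phiStar_eq_zero_of_not_phiStarFinite fun h =>
    hs (h.mono (hn₀.trans (Nat.cast_le.2 hn)))).symm

lemma MemS.exists_abs_pdm_le (hω : ∀ t, 0 ≤ t → 0 ≤ ω t) (hs : ¬ PhiStarFinite ω s)
    (hg : MemS ω g) : ∃ C : ℝ, ∀ (α : Fin N → ℕ) (x : Euc N), |pdm α g x| ≤ C := by
  obtain ⟨C, hC⟩ := hg.2 1 1 one_pos one_pos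
  simp only [one_mul, div_one] at hC
  obtain ⟨b, hb⟩ := bddAbove_range_phiStar_natCast hs
  refine ⟨|C| * Real.exp b, fun α x => ?_⟩
  calc |pdm α g x| ≤ Real.exp (ω ‖x‖) * |pdm α g x| :=
        le_mul_of_one_le_left (abs_nonneg _) (Real.one_le_exp (hω _ (norm_nonneg x)))
    _ ≤ C * Real.exp (phiStar ω (msize α)) := hC α x
    _ ≤ |C| * Real.exp b := by
        gcongr
        · exact le_abs_self C
        · exact hb ⟨_, rfl⟩

lemma IsMultiplier.exists_abs_le (hω : IsWeightFun ω) (hs : ¬ PhiStarFinite ω s)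
    (hf : IsMultiplier ω f) : ∃ (A : ℝ) (m : ℕ), ∀ x, |f x| ≤ A * (1 + ‖x‖) ^ m := by
  by_contra! hcon
  choose x hx using fun j : ℕ => hcon (j * 2 ^ j) j
  obtain ⟨g, hg, hgx⟩ := exists_expTypeDecay_ge x
  obtain ⟨C, hC⟩ := (hf g (hg.memS hω hs)).exists_abs_pdm_le hω.nonneg hs
  obtain ⟨j, hj⟩ := exists_nat_gt C
  refine hj.not_ge ?_
  calc (j : ℝ) = j * 2 ^ j * (1 + ‖x j‖) ^ j * ((1 / 2) ^ j * ((1 + ‖x j‖) ^ j)⁻¹) := by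
        have : (1 + ‖x j‖) ^ j ≠ 0 := by positivity
        rw [one_div, inv_pow]
        field_simp
    _ ≤ |f (x j)| * |g (x j)| :=
        mul_le_mul (hx j).le ((hgx j).trans (le_abs_self _)) (by positivity) (abs_nonneg _)
    _ = |f (x j) * g (x j)| := (abs_mul _ _).symm
    _ ≤ C := by simpa only [pdm_zero] using hC 0 (x j)

lemma IsMultiplier.contDiff (hω : IsWeightFun ω) (hs : ¬ PhiStarFinite ω s)
    (hf : IsMultiplier ω f) : ContDiff ℝ (⊤ : ℕ∞) f := by
  refine contDiff_iff_contDiffAt.2 fun x => ?_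
  obtain ⟨ψ, hψ, hψ₀⟩ := exists_expTypeDecay_one (V := Euc N)
  have hψx := hψ.comp_sub x
  have hne : ψ (x - x) ≠ 0 := by simp [hψ₀]
  have hquot := (hf _ (hψx.memS hω hs)).1.contDiffAt.div hψx.contDiff.contDiffAt hne
  refine hquot.congr_of_eventuallyEq ?_
  filter_upwards [hψx.contDiff.continuous.continuousAt.eventually_ne hne] with y hy
  exact (mul_div_cancel_right₀ (f y) hy).symm

lemma ExpTypeDecay.exists_abs_mul_comp_smul_le {r A : ℝ} {ψ : Euc N → ℝ}
    (hψ : ExpTypeDecay r ψ) {m : ℕ} (hf : ∀ x, |f x| ≤ A * (1 + ‖x‖) ^ m) :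
    ∃ M : ℝ, ∀ c : ℝ, 0 < c → c ≤ 1 → ∀ x, |f x * ψ (c • x)| ≤ M * c⁻¹ ^ m := by
  obtain ⟨C, hC⟩ := hψ.exists_norm_le m
  have hA : 0 ≤ A := by simpa using (abs_nonneg _).trans (hf 0)
  refine ⟨A * C, fun c hc hc' x => ?_⟩
  have hdilate : 1 + ‖x‖ ≤ c⁻¹ * (1 + ‖c • x‖) := by
    rw [norm_smul, Real.norm_of_nonneg hc.le, mul_add, inv_mul_cancel_left₀ hc.ne', mul_one]
    gcongr
    exact (one_le_inv₀ hc).2 hc'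
  calc |f x * ψ (c • x)| = |f x| * |ψ (c • x)| := abs_mul _ _
    _ ≤ A * (1 + ‖x‖) ^ m * |ψ (c • x)| := by gcongr; exact hf x
    _ ≤ A * (c⁻¹ * (1 + ‖c • x‖)) ^ m * |ψ (c • x)| := by gcongr
    _ = A * c⁻¹ ^ m * ((1 + ‖c • x‖) ^ m * ‖ψ (c • x)‖) := by
        rw [mul_pow, Real.norm_eq_abs]; ring
    _ ≤ A * c⁻¹ ^ m * C := mul_le_mul_of_nonneg_left (hC _) (by positivity)
    _ = A * C * c⁻¹ ^ m := by ring

lemma IsMultiplier.memS_mul_comp_smul_pow (hω : IsWeightFun ω) (hs : ¬ PhiStarFinite ω s)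
    (hf : IsMultiplier ω f) {ψ : Euc N → ℝ} (hψ : ExpTypeDecay 1 ψ) {j k : ℕ} (hj : j ≠ 0)
    (hjk : j ≤ k) : MemS ω fun x => (f x * ψ ((k : ℝ)⁻¹ • x)) ^ j := by
  obtain ⟨p, rfl⟩ := Nat.exists_eq_succ_of_ne_zero hj
  have hk : (0 : ℝ) < k := Nat.cast_pos.2 (p.succ_pos.trans_le hjk)
  have hk' : (1 : ℝ) ≤ k := Nat.one_le_cast.2 (p.succ_pos.trans_le hjk)
  have hψk := (hψ.comp_smul (inv_pos.2 hk) (inv_le_one_of_one_le₀ hk')).pow_succ p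
  simp only [mul_pow]
  refine hf.pow _ _ ((hψk.mono (by positivity) ?_).memS hω hs)
  rw [mul_one, ← div_eq_mul_inv]
  exact (div_le_one hk).2 (Nat.cast_le.2 hjk)

lemma MemS.abs_pd_iterate_le_of_pow (hω : ∀ t, 0 ≤ t → 0 ≤ ω t) (hs : ¬ PhiStarFinite ω s)
    {k : ℕ} (hk : k ≠ 0) (hg : MemS ω g) (hgk : MemS ω fun x => g x ^ k) {M : ℝ}
    (hM : ∀ x, |g x| ≤ M) (i : Fin N) (n : ℕ) (x : Euc N) :
    |(pd i)^[n] g x| ≤ n ! * (M * Real.exp 1) * (1 / k) ^ n := by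
  obtain ⟨C, hC⟩ := hg.exists_abs_pdm_le hω hs
  obtain ⟨C', hC'⟩ := hgk.exists_abs_pdm_le hω hs
  set γ : ℝ → Euc N := fun t => x + t • EuclideanSpace.single i 1
  have hγ : ContDiff ℝ (⊤ : ℕ∞) γ := by fun_prop
  have hline := abs_iteratedDeriv_le_of_pow (hg.1.comp hγ) zero_le_one one_pos hk
    (C := C) (C' := C')
    (fun n t => by
      rw [Function.comp_def, iteratedDeriv_comp_line hg.1, ← pdm_single hg.1, one_pow, mul_one]
      exact hC _ _)
    (fun n t => by
      simp only [Function.comp_def]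
      rw [iteratedDeriv_comp_line hgk.1, ← pdm_single hgk.1, one_pow, mul_one]
      exact hC' _ _)
    (fun t => hM _) n 0
  simpa only [Function.comp_def, γ, iteratedDeriv_comp_line hg.1, zero_smul, add_zero] using hline

lemma tendsto_pd_iterate_mul_comp_smul (hf : ContDiff ℝ (⊤ : ℕ∞) f) {ψ : Euc N → ℝ}
    (hψ : ContDiff ℝ (⊤ : ℕ∞) ψ) (hψ₀ : ψ 0 = 1) (i : Fin N) (n : ℕ) (x : Euc N) :
    Tendsto (fun c : ℝ => (pd i)^[n] (fun y => f y * ψ (c • y)) x) (𝓝 0)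
      (𝓝 ((pd i)^[n] f x)) := by
  have hcont : Continuous fun c : ℝ => (pd i)^[n] (fun y => f y * ψ (c • y)) x :=
    (contDiff_uncurry_pd_iterate (Φ := fun (c : ℝ) y => f y * ψ (c • y))
      ((hf.comp contDiff_snd).mul (hψ.comp (contDiff_fst.smul contDiff_snd))) i
      n).continuous.comp (Continuous.prodMk_left x)
  simpa [hψ₀] using hcont.tendsto 0

lemma IsMultiplier.exists_pd_iterate_eq_zero (hω : IsWeightFun ω) (hs : ¬ PhiStarFinite ω s)
    (hf : IsMultiplier ω f) : ∃ m : ℕ, ∀ i : Fin N, (pd i)^[m] f = 0 := by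
  obtain ⟨A, m, hA⟩ := hf.exists_abs_le hω hs
  obtain ⟨ψ, hψ, hψ₀⟩ := exists_expTypeDecay_one (V := Euc N)
  obtain ⟨M, hM⟩ := hψ.exists_abs_mul_comp_smul_le hA
  refine ⟨m + 1, fun i => funext fun x => abs_nonpos_iff.1 ?_⟩
  have hbound : ∀ k : ℕ, k ≠ 0 → |(pd i)^[m + 1] (fun y => f y * ψ ((k : ℝ)⁻¹ • y)) x| ≤
      (m + 1)! * (M * Real.exp 1) * (k : ℝ)⁻¹ := by
    intro k hk
    have hk₁ : 1 ≤ k := Nat.one_le_iff_ne_zero.2 hk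
    have hk₀ : (0 : ℝ) < k := Nat.cast_pos.2 hk₁
    have hmem : MemS ω fun y => f y * ψ ((k : ℝ)⁻¹ • y) := by
      simpa only [pow_one] using hf.memS_mul_comp_smul_pow hω hs hψ one_ne_zero hk₁
    calc _ ≤ (m + 1)! * (M * (k : ℝ)⁻¹⁻¹ ^ m * Real.exp 1) * (1 / k) ^ (m + 1) :=
          hmem.abs_pd_iterate_le_of_pow hω.nonneg hs hk
            (hf.memS_mul_comp_smul_pow hω hs hψ hk le_rfl)
            (hM _ (inv_pos.2 hk₀) (inv_le_one_of_one_le₀ (Nat.one_le_cast.2 hk₁))) i _ x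
      _ = (m + 1)! * (M * Real.exp 1) * (k : ℝ)⁻¹ := by
          rw [inv_inv, one_div, inv_pow]
          field_simp
          ring
  have hinv : Tendsto (fun k : ℕ => (k : ℝ)⁻¹) atTop (𝓝 0) := tendsto_inv_atTop_nhds_zero_nat
  refine le_of_tendsto_of_tendsto ((tendsto_pd_iterate_mul_comp_smul (hf.contDiff hω hs)
    hψ.contDiff hψ₀ i (m + 1) x).comp hinv).abs ?_ ((eventually_ne_atTop 0).mono hbound)
  simpa using hinv.const_mul ((m + 1)! * (M * Real.exp 1))

lemma memE_of_pd_iterate_eq_zero (hω : 0 ≤ ω 1) (hf : ContDiff ℝ (⊤ : ℕ∞) f) {m : ℕ}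
    (hm : ∀ i : Fin N, (pd i)^[m] f = 0) : MemE ω f := by
  refine ⟨hf, fun K hK l _ => ?_⟩
  have hcont : Continuous fun x => ∑ n ∈ Finset.range (N * m + 1), ‖iteratedFDeriv ℝ n f x‖ :=
    continuous_finsetSum _ fun n _ =>
      (hf.continuous_iteratedFDeriv (mod_cast le_top)).norm
  obtain ⟨C, hC⟩ := hK.exists_bound_of_continuousOn hcont.continuousOn
  have hbound : ∀ (α : Fin N → ℕ), ∀ x ∈ K, |pdm α f x| ≤ |C| := by
    intro α x hx
    rcases lt_or_ge (N * m) (msize α) with hα | hα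
    · simp [pdm_eq_zero_of_pd_iterate_eq_zero hf hm hα]
    · calc |pdm α f x| ≤ ‖iteratedFDeriv ℝ (msize α) f x‖ :=
            abs_pdm_le_norm_iteratedFDeriv hf α x
        _ ≤ ∑ n ∈ Finset.range (N * m + 1), ‖iteratedFDeriv ℝ n f x‖ :=
            Finset.single_le_sum (f := fun n => ‖iteratedFDeriv ℝ n f x‖)
              (fun _ _ => norm_nonneg _) (Finset.mem_range.2 (Nat.lt_succ_of_le hα))
        _ ≤ |C| := (le_abs_self _).trans ((hC x hx).trans (le_abs_self C))
  refine ⟨|C| * Real.exp (l * ω 1), fun α x hx => (hbound α x hx).trans ?_⟩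
  rw [mul_assoc]
  exact le_mul_of_one_le_right (abs_nonneg C) (one_le_exp_mul_exp_phiStar hω l.cast_nonneg _)

lemma IsMultiplier.memE_of_not_phiStarFinite (hω : IsWeightFun ω) (hs : ¬ PhiStarFinite ω s)
    (hf : IsMultiplier ω f) : MemE ω f := by
  obtain ⟨m, hm⟩ := hf.exists_pd_iterate_eq_zero hω hs
  exact memE_of_pd_iterate_eq_zero (hω.nonneg 1 zero_le_one) (hf.contDiff hω hs) hm

end LogarithmicWeight

theorem multiplier_mem_E_general {N : ℕ} {ω : ℝ → ℝ} (hω : IsWeightFun ω) {f : Euc N → ℝ}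
    (hf : IsMultiplier ω f) : MemE ω f := by
  by_cases hfin : ∀ s, PhiStarFinite ω s
  · exact hf.memE_of_phiStarFinite hω hfin
  · obtain ⟨s, hs⟩ := not_forall.1 hfin
    exact hf.memE_of_not_phiStarFinite hω hs

theorem multiplier_mem_E {N : ℕ} (ω : ℝ → ℝ) (hω : IsWeightFun ω)
    (hvan : ∀ t ∈ Set.Icc (0:ℝ) 1, ω t = 0)
    (f : Euc N → ℝ) (hf : ContDiff ℝ (⊤ : ℕ∞) f)
    (hmul : ∀ g : Euc N → ℝ, MemS ω g → MemS ω (fun x => f x * g x)) :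
    MemE ω f :=
  multiplier_mem_E_general hω hmul
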